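/- arXiv:2310.18960 — 2 statements merged into one kernel-verified Lean document; each statement's English description precedes it below -/
import Mathlib

section
/- Let P ⊂ ℝ³ be a zonotope with n ≥ 3 generators a_1, …, a_n such that any three of the generators are linearly independent. Then A(P,z) = 2(n−1) for every nonzero vector z ∈ ℝ³. -/
open scoped Pointwise BigOperators

noncomputable section

/-- Scalar product on `ℝ^d`. -/
def dotp {d : ℕ} (z x : Fin d → ℝ) : ℝ := ∑ i, z i * x i

/-- Number of vertices (extreme points) of a set. -/
def nVert {d : ℕ} (S : Set (Fin d → ℝ)) : ℕ := (Set.extremePoints ℝ S).ncard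

/-- `t⁻ = min {z·x : x ∈ P}`. -/
def tMin {d : ℕ} (P : Set (Fin d → ℝ)) (z : Fin d → ℝ) : ℝ := sInf (dotp z '' P)

/-- `t⁺ = max {z·x : x ∈ P}`. -/
def tMax {d : ℕ} (P : Set (Fin d → ℝ)) (z : Fin d → ℝ) : ℝ := sSup (dotp z '' P)

/-- `A(P,z)`: the average number of vertices of the sections `P ∩ {x : z·x = t}`
over `t ∈ [t⁻, t⁺]`. -/
def avgVert {d : ℕ} (P : Set (Fin d → ℝ)) (z : Fin d → ℝ) : ℝ :=
  (tMax P z - tMin P z)⁻¹ *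
    ∫ t in tMin P z..tMax P z, ((nVert (P ∩ {x | dotp z x = t}) : ℝ))

/-- A convex polytope: the convex hull of a finite point set. -/
def IsPolytope {d : ℕ} (P : Set (Fin d → ℝ)) : Prop :=
  ∃ s : Finset (Fin d → ℝ), P = convexHull ℝ (s : Set (Fin d → ℝ))

/-- The vectors are nonzero and pairwise linearly independent. -/
def PairwiseIndep {d n : ℕ} (a : Fin n → (Fin d → ℝ)) : Prop :=
  (∀ i, a i ≠ 0) ∧ ∀ i j, i ≠ j → ∀ c : ℝ, a j ≠ c • a i

/-- A zonotope: a translate of a Minkowski sum of segments `[0, aᵢ]` with pairwise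
linearly independent nonzero generators. -/
def IsZonotope {d : ℕ} (P : Set (Fin d → ℝ)) : Prop :=
  ∃ (n : ℕ) (a : Fin n → (Fin d → ℝ)) (x : Fin d → ℝ),
    PairwiseIndep a ∧ P = {x} + ∑ i, segment ℝ 0 (a i)

/-- Central symmetry: there is `c` with `2c - P = P`. -/
def CentSymm {d : ℕ} (P : Set (Fin d → ℝ)) : Prop :=
  ∃ c : Fin d → ℝ, (fun y => (2 : ℝ) • c - y) '' P = P

/-- An edge of the hypergraph `ℱ` on the generator set `V`: a subset `W ⊆ V` spanning
a 2-dimensional subspace, maximal with this property. -/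
def IsHEdge (V W : Finset (Fin 3 → ℝ)) : Prop :=
  W ⊆ V ∧ Module.finrank ℝ (Submodule.span ℝ (W : Set (Fin 3 → ℝ))) = 2 ∧
    ∀ v ∈ V, v ∉ W →
      Module.finrank ℝ (Submodule.span ℝ (insert v (W : Set (Fin 3 → ℝ)))) = 3

/-- The degree of `v` in the hypergraph `ℱ` on `V`: the number of edges containing `v`. -/
def degF (V : Finset (Fin 3 → ℝ)) (v : Fin 3 → ℝ) : ℕ :=
  {W : Finset (Fin 3 → ℝ) | IsHEdge V W ∧ v ∈ W}.ncard

/-- The set of edges of the polytope `P` that are parallel to `v`: one-dimensional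
exposed faces `[u,w]` of `P` with `w - u` a nonzero multiple of `v`. -/
def edgesParallel {d : ℕ} (P : Set (Fin d → ℝ)) (v : Fin d → ℝ) : Set (Set (Fin d → ℝ)) :=
  {e | ∃ u w : Fin d → ℝ, u ≠ w ∧ e = segment ℝ u w ∧
    (∃ y : Fin d → ℝ, y ≠ 0 ∧ e = {x ∈ P | ∀ p ∈ P, dotp y p ≤ dotp y x}) ∧
    ∃ c : ℝ, c ≠ 0 ∧ w - u = c • v}

open Filter Topology in
theorem zz_perturb {W ι : Type*} [AddCommGroup W] [Module ℝ W]
    (φ : ι → W →ₗ[ℝ] ℝ) (T S : Finset ι) (w0 u : W)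
    (h : ∀ j ∈ T, (j ∈ S → 0 < φ j w0) ∧ (j ∉ S → φ j w0 < 0)) :
    ∃ e : ℝ, 0 < e ∧ ∀ j ∈ T, (j ∈ S → 0 < φ j (w0 + e • u)) ∧ (j ∉ S → φ j (w0 + e • u) < 0) := by
  have hev : ∀ᶠ e in 𝓝[>] (0:ℝ), ∀ j ∈ T,
      (j ∈ S → 0 < φ j (w0 + e • u)) ∧ (j ∉ S → φ j (w0 + e • u) < 0) := by
    rw [Finset.eventually_all]
    intro j hj
    have hc : Tendsto (fun e : ℝ => φ j (w0 + e • u)) (𝓝[>] 0) (𝓝 (φ j w0)) := by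
      have : Continuous (fun e : ℝ => φ j w0 + e * φ j u) := by fun_prop
      have h2 := (this.tendsto 0).mono_left (nhdsWithin_le_nhds (s := Set.Ioi 0))
      simpa using h2
    by_cases hS : j ∈ S
    · filter_upwards [hc.eventually_const_lt ((h j hj).1 hS)] with e he
      exact ⟨fun _ => he, fun h => absurd hS h⟩
    · filter_upwards [hc.eventually_lt_const ((h j hj).2 hS)] with e he
      exact ⟨fun h => absurd h hS, fun _ => he⟩
  obtain ⟨e, he, he'⟩ := (hev.and self_mem_nhdsWithin).exists
  exact ⟨e, he', he⟩

def zzPat {W ι : Type*} [AddCommGroup W] [Module ℝ W]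
    (φ : ι → W →ₗ[ℝ] ℝ) (T S : Finset ι) (w : W) : Prop :=
  ∀ j ∈ T, (j ∈ S → 0 < φ j w) ∧ (j ∉ S → φ j w < 0)

open Classical in
theorem zz_count {W ι : Type*} [AddCommGroup W] [Module ℝ W]
    (φ : ι → W →ₗ[ℝ] ℝ) (T : Finset ι) (hT : T.Nonempty)
    (h0 : ∀ j ∈ T, ∃ w, φ j w ≠ 0)
    (h1 : ∀ j ∈ T, ∃ w, φ j w = 0 ∧ (∀ k ∈ T, k ≠ j → φ k w ≠ 0) ∧
      ∀ w', φ j w' = 0 → ∃ c : ℝ, w' = c • w) :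
    (T.powerset.filter (fun S => ∃ w, zzPat φ T S w)).card = 2 * T.card := by
  induction hT using Finset.Nonempty.cons_induction with
  | singleton j =>
    obtain ⟨w, hw⟩ := h0 j (by simp)
    have hpos : ∃ w, 0 < φ j w := by
      rcases lt_or_gt_of_ne hw with h | h
      · exact ⟨-w, by simpa using h⟩
      · exact ⟨w, h⟩
    obtain ⟨w, hw⟩ := hpos
    rw [Finset.filter_true_of_mem, Finset.card_powerset]
    · simp
    · intro S hS
      by_cases hj : j ∈ S
      · exact ⟨w, by simp [zzPat, hj, hw]⟩
      · exact ⟨-w, by simp [zzPat, hj, hw]⟩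
  | cons v T hv hT ih =>
    rw [Finset.cons_eq_insert] at *
    have ih' := ih (fun j hj => h0 j (by simp [hj])) (fun j hj => by
      obtain ⟨w, a, b, c⟩ := h1 j (by simp [hj])
      exact ⟨w, a, fun k hk => b k (by simp [hk]), c⟩)
    have hposv : ∃ u, 0 < φ v u := by
      obtain ⟨w, hw⟩ := h0 v (by simp)
      rcases lt_or_gt_of_ne hw with h | h
      · exact ⟨-w, by simpa using h⟩
      · exact ⟨w, h⟩
    obtain ⟨u, hu⟩ := hposv
    set A := T.powerset.filter (fun S => ∃ w, zzPat φ T S w ∧ 0 < φ v w) with hA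
    set B := T.powerset.filter (fun S => ∃ w, zzPat φ T S w ∧ φ v w < 0) with hB
    have hz : ∀ S w, zzPat φ T S w → φ v w = 0 →
        (∃ w, zzPat φ T S w ∧ 0 < φ v w) ∧ (∃ w, zzPat φ T S w ∧ φ v w < 0) := by
      intro S w hw hvw
      constructor
      · obtain ⟨e, he, h⟩ := zz_perturb φ T S w u hw
        exact ⟨_, h, by simp [hvw]; positivity⟩
      · obtain ⟨e, he, h⟩ := zz_perturb φ T S w (-u) hw
        exact ⟨_, h, by simp [hvw]; positivity⟩
    have hun : A ∪ B = T.powerset.filter (fun S => ∃ w, zzPat φ T S w) := by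
      ext S
      simp only [hA, hB, Finset.mem_union, Finset.mem_filter]
      constructor
      · rintro (⟨h, w, h1, h2⟩ | ⟨h, w, h1, h2⟩) <;> exact ⟨h, w, h1⟩
      · rintro ⟨h, w, hw⟩
        rcases lt_trichotomy (φ v w) 0 with h' | h' | h'
        · exact Or.inr ⟨h, w, hw, h'⟩
        · exact Or.inl ⟨h, (hz S w hw h').1⟩
        · exact Or.inl ⟨h, w, hw, h'⟩
    have hint : (A ∩ B).card = 2 := by
      obtain ⟨w0, hw0, hne, hall⟩ := h1 v (by simp)
      have hne' : ∀ k ∈ T, φ k w0 ≠ 0 := fun k hk =>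
        hne k (by simp [hk]) (fun h => hv (h ▸ hk))
      rw [Finset.card_eq_two]
      refine ⟨T.filter (fun j => 0 < φ j w0), T.filter (fun j => φ j w0 < 0), ?_, ?_⟩
      · intro h
        obtain ⟨k, hk⟩ := hT
        have := Finset.ext_iff.1 h k
        simp only [Finset.mem_filter, hk, true_and] at this
        rcases lt_or_gt_of_ne (hne' k hk) with h | h
        · exact absurd (this.2 h) (by linarith)
        · exact absurd (this.1 h) (by linarith)
      · ext S
        simp only [hA, hB, Finset.mem_inter, Finset.mem_filter, Finset.mem_powerset,
          Finset.mem_insert, Finset.mem_singleton]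
        constructor
        · rintro ⟨⟨hS, w1, hp1, hv1⟩, -, w2, hp2, hv2⟩
          -- combination
          set w := (-(φ v w2)) • w1 + (φ v w1) • w2 with hw
          have hvw : φ v w = 0 := by simp [hw]; ring
          have hpat : zzPat φ T S w := by
            intro j hj
            refine ⟨fun h => ?_, fun h => ?_⟩
            · have := (hp1 j hj).1 h
              have := (hp2 j hj).1 h
              simp only [hw, map_add, map_smul, smul_eq_mul]
              have := mul_pos (neg_pos.2 hv2) ((hp1 j hj).1 h)
              have := mul_pos hv1 ((hp2 j hj).1 h)
              linarith
            · simp only [hw, map_add, map_smul, smul_eq_mul]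
              have := mul_neg_of_pos_of_neg (neg_pos.2 hv2) ((hp1 j hj).2 h)
              have := mul_neg_of_pos_of_neg hv1 ((hp2 j hj).2 h)
              linarith
          obtain ⟨c, hc⟩ := hall w hvw
          have hpat' : ∀ j ∈ T, (j ∈ S → 0 < c * φ j w0) ∧ (j ∉ S → c * φ j w0 < 0) := by
            intro j hj
            have := hpat j hj
            rw [hc] at this
            simpa using this
          rcases lt_trichotomy c 0 with h | h | h
          · right
            ext j
            simp only [Finset.mem_filter]
            constructor
            · intro hj
              exact ⟨hS hj, by have := (hpat' j (hS hj)).1 hj; nlinarith⟩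
            · rintro ⟨hj, hj'⟩
              by_contra hn
              have := (hpat' j hj).2 hn
              nlinarith
          · exfalso
            obtain ⟨k, hk⟩ := hT
            have := hpat' k hk
            by_cases hkS : k ∈ S
            · have := this.1 hkS; simp [h] at this
            · have := this.2 hkS; simp [h] at this
          · left
            ext j
            simp only [Finset.mem_filter]
            constructor
            · intro hj
              exact ⟨hS hj, by have := (hpat' j (hS hj)).1 hj; nlinarith⟩
            · rintro ⟨hj, hj'⟩
              by_contra hn
              have := (hpat' j hj).2 hn
              nlinarith
        · rintro (h | h)
          · have hp : zzPat φ T S w0 := by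
              intro j hj
              have := hne' j hj
              simp only [h, Finset.mem_filter, hj, true_and]
              exact ⟨id, fun h => lt_of_le_of_ne (not_lt.1 h) this⟩
            have := hz S w0 hp hw0
            have hS : S ⊆ T := by rw [h]; exact Finset.filter_subset _ _
            exact ⟨⟨hS, this.1⟩, hS, this.2⟩
          · have hp : zzPat φ T S (-w0) := by
              intro j hj
              have := hne' j hj
              simp only [h, Finset.mem_filter, hj, true_and, map_neg]
              refine ⟨fun h => by linarith, fun h => ?_⟩
              have := lt_of_le_of_ne (not_lt.1 h) this.symm
              linarith
            have := hz S (-w0) hp (by simp [hw0])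
            have hS : S ⊆ T := by rw [h]; exact Finset.filter_subset _ _
            exact ⟨⟨hS, this.1⟩, hS, this.2⟩
    have hsplit : (((insert v T).powerset).filter (fun S => ∃ w, zzPat φ (insert v T) S w))
        = B ∪ A.image (insert v) := by
      ext S
      rw [Finset.powerset_insert]
      simp only [hA, hB, Finset.mem_union, Finset.mem_filter, Finset.mem_image,
        Finset.mem_powerset]
      constructor
      · rintro ⟨h | ⟨S', hS', rfl⟩, w, hw⟩
        · left
          have hvS : v ∉ S := fun hh => hv (h hh)
          exact ⟨h, w, fun j hj => hw j (by simp [hj]), (hw v (by simp)).2 hvS⟩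
        · right
          refine ⟨S', ⟨hS', w, fun j hj => ?_, (hw v (by simp)).1 (by simp)⟩, rfl⟩
          have hjv : j ≠ v := fun h => hv (h ▸ hj)
          simpa [hjv] using hw j (by simp [hj])
      · rintro (⟨h, w, hw, hv'⟩ | ⟨S', ⟨h, w, hw, hv'⟩, rfl⟩)
        · have hvS : v ∉ S := fun hh => hv (h hh)
          refine ⟨Or.inl h, w, fun j hj => ?_⟩
          rcases Finset.mem_insert.1 hj with rfl | hj
          · exact ⟨fun h => absurd h hvS, fun _ => hv'⟩
          · exact hw j hj
        · refine ⟨Or.inr ⟨S', h, rfl⟩, w, fun j hj => ?_⟩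
          rcases Finset.mem_insert.1 hj with rfl | hj
          · exact ⟨fun _ => hv', fun h => absurd (Finset.mem_insert_self _ _) h⟩
          · have hjv : j ≠ v := fun h => hv (h ▸ hj)
            simpa [hjv] using hw j hj
    rw [hsplit, Finset.card_union_of_disjoint, Finset.card_image_of_injOn]
    · have := Finset.card_union_add_card_inter A B
      rw [Finset.card_insert_of_notMem hv]
      rw [hun] at this
      omega
    · intro S hS S' hS' h
      have hS1 : S ⊆ T := Finset.mem_powerset.1 (Finset.mem_filter.1 hS).1
      have hS2 : S' ⊆ T := Finset.mem_powerset.1 (Finset.mem_filter.1 hS').1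
      have e1 : (insert v S).erase v = S := Finset.erase_insert (fun hh => hv (hS1 hh))
      have e2 : (insert v S').erase v = S' := Finset.erase_insert (fun hh => hv (hS2 hh))
      rw [← e1, ← e2]
      exact congrArg (fun s => s.erase v) h
    · rw [Finset.disjoint_left]
      intro S hS hS'
      obtain ⟨S', -, rfl⟩ := Finset.mem_image.1 hS'
      have hS1 : insert v S' ⊆ T := Finset.mem_powerset.1 (Finset.mem_filter.1 hS).1
      exact hv (hS1 (Finset.mem_insert_self _ _))

def zzPt {E : Type*} [AddCommGroup E] [Module ℝ E] {n : ℕ} (x : E) (a : Fin n → E)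
    (l : Fin n → ℝ) : E := x + ∑ j, l j • a j

def zzZono {E : Type*} [AddCommGroup E] [Module ℝ E] {n : ℕ} (x : E) (a : Fin n → E) : Set E :=
  {p | ∃ l : Fin n → ℝ, (∀ j, l j ∈ Set.Icc (0:ℝ) 1) ∧ p = zzPt x a l}

def zzLam {n : ℕ} (i : Fin n) (S : Finset (Fin n)) (θ : ℝ) : Fin n → ℝ :=
  fun j => if j = i then θ else if j ∈ S then 1 else 0

def zzValid {E : Type*} [AddCommGroup E] [Module ℝ E] {n : ℕ} (a : Fin n → E)
    (i : Fin n) (S : Finset (Fin n)) : Prop :=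
  i ∉ S ∧ ∃ f : E →ₗ[ℝ] ℝ, f (a i) = 0 ∧
    ∀ j, j ≠ i → (j ∈ S → 0 < f (a j)) ∧ (j ∉ S → f (a j) < 0)

theorem zzPt_add {E : Type*} [AddCommGroup E] [Module ℝ E] {n : ℕ} (x : E) (a : Fin n → E)
    (l m : Fin n → ℝ) : zzPt x a (l + m) = zzPt x a l + ∑ j, m j • a j := by
  simp [zzPt, add_smul, Finset.sum_add_distrib, add_assoc]

theorem zzPt_lam {E : Type*} [AddCommGroup E] [Module ℝ E] {n : ℕ} (x : E) (a : Fin n → E)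
    (i : Fin n) (S : Finset (Fin n)) (θ : ℝ) :
    zzPt x a (zzLam i S θ) = zzPt x a (zzLam i S 0) + θ • a i := by
  have : zzLam i S θ = zzLam i S 0 + Pi.single i θ := by
    ext j
    by_cases h : j = i
    · subst h; simp [zzLam]
    · simp [zzLam, h]
  rw [this, zzPt_add]
  congr 1
  rw [Finset.sum_eq_single i]
  · simp
  · intro j _ hj; simp [hj]
  · simp

theorem zzLam_mem {n : ℕ} (i : Fin n) (S : Finset (Fin n)) (θ : ℝ) (h : θ ∈ Set.Icc (0:ℝ) 1)
    (j : Fin n) : zzLam i S θ j ∈ Set.Icc (0:ℝ) 1 := by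
  unfold zzLam
  split_ifs
  · exact h
  · simp
  · simp

open Filter Topology in
theorem zz_small {n : ℕ} (l v : Fin n → ℝ) (hl : ∀ j, l j ∈ Set.Icc (0:ℝ) 1)
    (h1 : ∀ j, l j = 1 → v j ≤ 0) (h0 : ∀ j, l j = 0 → 0 ≤ v j) :
    ∀ᶠ e in 𝓝[>] (0:ℝ), ∀ j, l j + e * v j ∈ Set.Icc (0:ℝ) 1 ∧
      (v j ≠ 0 → l j + e * v j ∈ Set.Ioo (0:ℝ) 1) := by
  rw [eventually_all]
  intro j
  by_cases hv : v j = 0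
  · simpa [hv] using hl j
  have hc : Tendsto (fun e : ℝ => l j + e * v j) (𝓝[>] 0) (𝓝 (l j)) := by
    have : Continuous (fun e : ℝ => l j + e * v j) := by fun_prop
    have h2 := (this.tendsto 0).mono_left (nhdsWithin_le_nhds (s := Set.Ioi 0))
    simpa using h2
  have hup : ∀ᶠ e in 𝓝[>] (0:ℝ), l j + e * v j < 1 := by
    rcases (hl j).2.eq_or_lt with h | h
    · filter_upwards [self_mem_nhdsWithin] with e he
      have he : 0 < e := he
      have := lt_of_le_of_ne (h1 j h) hv
      nlinarith
    · exact hc.eventually_lt_const h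
  have hlo : ∀ᶠ e in 𝓝[>] (0:ℝ), 0 < l j + e * v j := by
    rcases (hl j).1.eq_or_lt with h | h
    · filter_upwards [self_mem_nhdsWithin] with e he
      have he : 0 < e := he
      have := lt_of_le_of_ne (h0 j h.symm) (Ne.symm hv)
      nlinarith
    · exact hc.eventually_const_lt h
  filter_upwards [hup, hlo] with e h1 h2
  exact ⟨⟨h2.le, h1.le⟩, fun _ => ⟨h2, h1⟩⟩

theorem zz_not_two {E : Type*} [AddCommGroup E] [Module ℝ E] {n : ℕ} (x : E) (a : Fin n → E)
    (g : E →ₗ[ℝ] ℝ) (t : ℝ)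
    (h2 : ∀ i j, i ≠ j → ∀ α β : ℝ, α • a i + β • a j = 0 → α = 0 ∧ β = 0)
    (l : Fin n → ℝ) (hl : ∀ j, l j ∈ Set.Icc (0:ℝ) 1)
    (hp : zzPt x a l ∈ Set.extremePoints ℝ (zzZono x a ∩ {y | g y = t}))
    (i j : Fin n) (hij : i ≠ j) (hi : l i ∈ Set.Ioo (0:ℝ) 1) (hj : l j ∈ Set.Ioo (0:ℝ) 1) :
    False := by
  obtain ⟨α, β, hne, hg⟩ : ∃ α β : ℝ, ¬ (α = 0 ∧ β = 0) ∧ α * g (a i) + β * g (a j) = 0 := by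
    by_cases h : g (a i) = 0
    · exact ⟨1, 0, by simp, by simp [h]⟩
    · exact ⟨g (a j), - g (a i), by simp [h], by ring⟩
  set m : Fin n → ℝ := Pi.single i α + Pi.single j β with hm
  have hsum : ∑ k, m k • a k = α • a i + β • a j := by
    simp only [hm, Pi.add_apply, add_smul, Finset.sum_add_distrib]
    congr 1
    · rw [Finset.sum_eq_single i]
      · simp
      · intro k _ hk; simp [hk]
      · simp
    · rw [Finset.sum_eq_single j]
      · simp
      · intro k _ hk; simp [hk]
      · simp
  have hfr : ∀ k, m k ≠ 0 → l k ∈ Set.Ioo (0:ℝ) 1 := by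
    intro k hk
    by_cases h : k = i
    · exact h ▸ hi
    by_cases h' : k = j
    · exact h' ▸ hj
    · simp [hm, h, h'] at hk
  have hm1 : ∀ k, l k = 1 → m k = 0 := fun k hk => by
    by_contra h; exact absurd (hfr k h).2 (by simp [hk])
  have hm0 : ∀ k, l k = 0 → m k = 0 := fun k hk => by
    by_contra h; exact absurd (hfr k h).1 (by simp [hk])
  have e1 := zz_small l m hl (fun k hk => (hm1 k hk).le) (fun k hk => (hm0 k hk).ge)
  have e2 := zz_small l (-m) hl (fun k hk => by simp [hm1 k hk]) (fun k hk => by simp [hm0 k hk])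
  obtain ⟨e, ⟨he1, he2⟩, he⟩ := ((e1.and e2).and self_mem_nhdsWithin).exists
  have he : 0 < e := he
  have hpt : ∀ c : ℝ, zzPt x a (l + c • m) = zzPt x a l + c • (α • a i + β • a j) := by
    intro c
    rw [zzPt_add, ← hsum, Finset.smul_sum]
    simp [mul_smul]
  have hgp : ∀ c : ℝ, g (zzPt x a (l + c • m)) = t := by
    intro c
    have : g (zzPt x a l) = t := hp.1.2
    rw [hpt, map_add, this]
    simp only [map_smul, map_add, smul_eq_mul, hg]; simp
  rw [mem_extremePoints] at hp
  have := hp.2 (zzPt x a (l + e • m)) ⟨⟨_, fun k => by simpa using (he1 k).1, rfl⟩, hgp _⟩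
    (zzPt x a (l + (-e) • m)) ⟨⟨_, fun k => by simpa using (he2 k).1, rfl⟩, hgp _⟩ (by
      refine ⟨1/2, 1/2, by norm_num, by norm_num, by norm_num, ?_⟩
      rw [hpt, hpt]
      module)
  have h := this.1
  rw [hpt] at h
  have h : e • (α • a i + β • a j) = 0 := by simpa using h
  exact hne (h2 i j hij α β ((smul_eq_zero.1 h).resolve_left he.ne'))

theorem zz_valid_of {n : ℕ} (x : Fin 3 → ℝ) (a : Fin n → (Fin 3 → ℝ))
    (g : (Fin 3 → ℝ) →ₗ[ℝ] ℝ) (t : ℝ)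
    (h2 : ∀ i j, i ≠ j → ∀ α β : ℝ, α • a i + β • a j = 0 → α = 0 ∧ β = 0)
    (i : Fin n) (S : Finset (Fin n)) (hiS : i ∉ S) (θ : ℝ) (hθ : θ ∈ Set.Ioo (0:ℝ) 1)
    (hp : zzPt x a (zzLam i S θ) ∈ Set.extremePoints ℝ (zzZono x a ∩ {y | g y = t})) :
    zzValid a i S := by
  refine ⟨hiS, ?_⟩
  set ε : Fin n → ℝ := fun j => if j ∈ S then 1 else -1 with hε
  set K : Set (Fin n → ℝ) := stdSimplex ℝ (Fin n) ∩ {w | w i = 0} with hK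
  have hKc : IsCompact K := (isCompact_stdSimplex ℝ (Fin n)).inter_right
    (isClosed_eq (continuous_apply i) continuous_const)
  have hKv : Convex ℝ K := (convex_stdSimplex ℝ (Fin n)).inter (by
    intro u hu v hv α β _ _ _
    have hu : u i = 0 := hu
    have hv : v i = 0 := hv
    simp [hu, hv])
  set Φ : (Fin n → ℝ) →ₗ[ℝ] (Fin 3 → ℝ) :=
    ∑ j, (LinearMap.proj j : (Fin n → ℝ) →ₗ[ℝ] ℝ).smulRight (ε j • a j) with hΦ
  have hΦa : ∀ w, Φ w = ∑ j, w j • (ε j • a j) := by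
    intro w; simp [hΦ, LinearMap.sum_apply]
  have hcont : Continuous Φ := Φ.continuous_of_finiteDimensional
  by_cases hd : Disjoint (Φ '' K) (Submodule.span ℝ {a i} : Set (Fin 3 → ℝ))
  · obtain ⟨f, u, v, h1, h3, h4⟩ := geometric_hahn_banach_compact_closed
      (hKv.linear_image Φ) (hKc.image hcont) (Submodule.convex _)
      (Submodule.closed_of_finiteDimensional (Submodule.span ℝ {a i})) hd
    have hv0 : v < 0 := by simpa using h4 0 (Submodule.zero_mem _)
    have hfi : f (a i) = 0 := by
      by_contra hne
      have := h4 ((v / f (a i)) • a i)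
        (Submodule.smul_mem _ _ (Submodule.mem_span_singleton_self _))
      rw [map_smul, smul_eq_mul, div_mul_cancel₀ _ hne] at this
      exact lt_irrefl _ this
    refine ⟨-(f : (Fin 3 → ℝ) →ₗ[ℝ] ℝ), by simp [hfi], fun j hj => ?_⟩
    have hjK : (Pi.single j 1 : Fin n → ℝ) ∈ K := by
      refine ⟨single_mem_stdSimplex ℝ j, ?_⟩
      simp [hj.symm]
    have hh := h1 _ ⟨_, hjK, rfl⟩
    have hval : Φ (Pi.single j 1) = ε j • a j := by
      rw [hΦa, Finset.sum_eq_single j]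
      · simp
      · intro k _ hk; simp [hk]
      · simp
    rw [hval, map_smul, smul_eq_mul] at hh
    constructor
    · intro hS
      simp only [hε, hS, if_true] at hh
      simp; linarith
    · intro hS
      simp only [hε, hS, if_false] at hh
      simp; linarith
  · exfalso
    rw [Set.not_disjoint_iff] at hd
    obtain ⟨_, ⟨w, ⟨⟨hw0, hw1⟩, hwi⟩, rfl⟩, hsp⟩ := hd
    have hwi : w i = 0 := hwi
    obtain ⟨c, hc⟩ := Submodule.mem_span_singleton.1 hsp
    obtain ⟨k, -, hk⟩ : ∃ k ∈ Finset.univ, w k ≠ 0 :=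
      Finset.exists_ne_zero_of_sum_ne_zero (by rw [hw1]; norm_num)
    have hki : k ≠ i := fun h => hk (h ▸ hwi)
    set l := zzLam i S θ with hl
    have hlm := zzLam_mem i S θ ⟨hθ.1.le, hθ.2.le⟩
    set ν : Fin n → ℝ := fun j => if j = i then c else - (w j * ε j) with hν
    have hνs : ∑ j, ν j • a j = 0 := by
      have : ∀ j, ν j • a j = (Pi.single i c : Fin n → ℝ) j • a j - w j • (ε j • a j) := by
        intro j
        by_cases h : j = i
        · subst h; simp [hν, hwi]
        · simp [hν, h, mul_smul]
      simp only [this, Finset.sum_sub_distrib]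
      rw [← hΦa, ← hc, Finset.sum_eq_single i]
      · simp
      · intro k _ hk; simp [hk]
      · simp
    have hli : l i = θ := by simp [hl, zzLam]
    have hlj : ∀ j, j ≠ i → l j = if j ∈ S then 1 else 0 := fun j hj => by simp [hl, zzLam, hj]
    have ev := zz_small l ν hlm (by
      intro j hj
      by_cases h : j = i
      · subst h; rw [hli] at hj; exact absurd hθ.2 (by simp [hj])
      · rw [hlj j h] at hj
        have hS : j ∈ S := by by_contra hS; simp [hS] at hj
        simpa [hν, h, hε, hS] using hw0 j) (by
      intro j hj
      by_cases h : j = i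
      · subst h; rw [hli] at hj; exact absurd hθ.1 (by simp [hj])
      · rw [hlj j h] at hj
        have hS : j ∉ S := by intro hS; simp [hS] at hj
        simpa [hν, h, hε, hS] using hw0 j)
    obtain ⟨e, he⟩ := ev.exists
    have hpt : zzPt x a (l + e • ν) = zzPt x a l := by
      rw [zzPt_add]
      have : ∑ j, (e • ν) j • a j = e • ∑ j, ν j • a j := by
        rw [Finset.smul_sum]; simp [mul_smul]
      rw [this, hνs]; simp
    rw [← hpt] at hp
    refine zz_not_two x a g t h2 (l + e • ν) (fun j => by simpa using (he j).1) hp i k hki.symm ?_ ?_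
    · by_cases h : ν i = 0
      · simpa [h, hli] using hθ
      · simpa using (he i).2 h
    · have : ν k ≠ 0 := by
        simp only [hν, hki, if_false, hε]
        split_ifs <;> simpa using hk
      simpa using (he k).2 this

theorem zz_max {E : Type*} [AddCommGroup E] [Module ℝ E] {n : ℕ} (x : E) (a : Fin n → E)
    (i : Fin n) (S : Finset (Fin n)) (f : E →ₗ[ℝ] ℝ) (hfi : f (a i) = 0)
    (hf : ∀ j, j ≠ i → (j ∈ S → 0 < f (a j)) ∧ (j ∉ S → f (a j) < 0))
    (θ : ℝ) (l : Fin n → ℝ) (hl : ∀ j, l j ∈ Set.Icc (0:ℝ) 1) :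
    f (zzPt x a l) ≤ f (zzPt x a (zzLam i S θ)) ∧
    (f (zzPt x a l) = f (zzPt x a (zzLam i S θ)) → ∀ j, j ≠ i → l j = zzLam i S θ j) := by
  have hd : f (zzPt x a (zzLam i S θ)) - f (zzPt x a l)
      = ∑ j, (zzLam i S θ j - l j) * f (a j) := by
    simp [zzPt, map_sum, sub_mul, Finset.sum_sub_distrib]
  have hnn : ∀ j ∈ Finset.univ, 0 ≤ (zzLam i S θ j - l j) * f (a j) := by
    intro j _
    by_cases h : j = i
    · simp [h, hfi]
    by_cases hS : j ∈ S
    · have := (hf j h).1 hS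
      have h3 := (hl j).2
      simp only [zzLam, h, hS, if_true, if_false]
      exact mul_nonneg (by linarith) this.le
    · have := (hf j h).2 hS
      have h3 := (hl j).1
      simp only [zzLam, h, hS, if_false]
      exact mul_nonneg_of_nonpos_of_nonpos (by linarith) this.le
  constructor
  · have := Finset.sum_nonneg hnn
    linarith
  · intro he j hj
    have h0 : ∑ j, (zzLam i S θ j - l j) * f (a j) = 0 := by rw [← hd, he]; ring
    have := (Finset.sum_eq_zero_iff_of_nonneg hnn).1 h0 j (Finset.mem_univ _)
    have hne : f (a j) ≠ 0 := by
      by_cases hS : j ∈ S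
      · exact ((hf j hj).1 hS).ne'
      · exact ((hf j hj).2 hS).ne
    have := (mul_eq_zero.1 this).resolve_right hne
    linarith

/-- parameter on the edge -/
def zzTh {E : Type*} [AddCommGroup E] [Module ℝ E] {n : ℕ} (x : E) (a : Fin n → E)
    (g : E →ₗ[ℝ] ℝ) (t : ℝ) (q : Fin n × Finset (Fin n)) : ℝ :=
  (t - g (zzPt x a (zzLam q.1 q.2 0))) / g (a q.1)

theorem zz_ext_eq {n : ℕ} (x : Fin 3 → ℝ) (a : Fin n → (Fin 3 → ℝ))
    (g : (Fin 3 → ℝ) →ₗ[ℝ] ℝ) (t : ℝ)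
    (h2 : ∀ i j, i ≠ j → ∀ α β : ℝ, α • a i + β • a j = 0 → α = 0 ∧ β = 0)
    (ht : t ∉ Set.range (fun S : Finset (Fin n) => g (zzPt x a (fun j => if j ∈ S then 1 else 0)))) :
    Set.extremePoints ℝ (zzZono x a ∩ {y | g y = t}) =
    (fun q : Fin n × Finset (Fin n) => zzPt x a (zzLam q.1 q.2 (zzTh x a g t q))) ''
      {q | zzValid a q.1 q.2 ∧ zzTh x a g t q ∈ Set.Ioo (0:ℝ) 1} := by
  apply Set.Subset.antisymm
  · intro p hp
    obtain ⟨⟨l, hl, rfl⟩, hgt⟩ := hp.1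
    have hgt : g (zzPt x a l) = t := hgt
    by_cases hF : ∃ i, l i ∈ Set.Ioo (0:ℝ) 1
    · obtain ⟨i, hi⟩ := hF
      set S := Finset.univ.filter (fun j => j ≠ i ∧ l j = 1) with hS
      have hlam : l = zzLam i S (l i) := by
        ext j
        by_cases h : j = i
        · subst h; simp [zzLam]
        by_cases h1 : l j = 1
        · simp [zzLam, h, hS, h1]
        · have : l j = 0 := by
            by_contra h0
            exact zz_not_two x a g t h2 l hl hp i j (Ne.symm h) hi
              ⟨lt_of_le_of_ne (hl j).1 (Ne.symm h0), lt_of_le_of_ne (hl j).2 h1⟩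
          simp [zzLam, h, hS, this]
      have hiS : i ∉ S := by simp [hS]
      have hgi : g (zzPt x a (zzLam i S 0)) + l i * g (a i) = t := by
        rw [← hgt]; conv_rhs => rw [hlam, zzPt_lam]
        simp
      have hgne : g (a i) ≠ 0 := by
        intro h
        apply ht
        refine ⟨S, ?_⟩
        rw [h, mul_zero, add_zero] at hgi
        rw [← hgi]
        show g (zzPt x a _) = _
        congr 2
        ext j
        by_cases hj : j = i
        · subst hj; simp [zzLam, hiS]
        · simp [zzLam, hj]
      have hth : zzTh x a g t (i, S) = l i := by
        simp only [zzTh]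
        rw [div_eq_iff hgne]; linarith
      refine ⟨(i, S), ⟨?_, by rw [hth]; exact hi⟩, ?_⟩
      · rw [hlam] at hp
        exact zz_valid_of x a g t h2 i S hiS (l i) hi hp
      · simp only [hth]
        rw [← hlam]
    · exfalso
      push Not at hF
      apply ht
      refine ⟨Finset.univ.filter (fun j => l j = 1), ?_⟩
      rw [← hgt]
      show g (zzPt x a _) = _
      congr 2
      ext j
      by_cases h : l j = 1
      · simp [h]
      · have : l j = 0 := by
          by_contra h0
          exact hF j ⟨lt_of_le_of_ne (hl j).1 (Ne.symm h0), lt_of_le_of_ne (hl j).2 h⟩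
        simp [this]
  · rintro _ ⟨⟨i, S⟩, ⟨⟨hiS, f, hfi, hf⟩, hth⟩, rfl⟩
    have hgne : g (a i) ≠ 0 := by
      intro h
      simp [zzTh, h] at hth
    set θ := zzTh x a g t (i, S) with hθ
    have hgv : ∀ s : ℝ, g (zzPt x a (zzLam i S s)) = g (zzPt x a (zzLam i S 0)) + s * g (a i) := by
      intro s; rw [zzPt_lam]; simp
    have hgt : g (zzPt x a (zzLam i S θ)) = t := by
      rw [hgv, hθ]; simp only [zzTh]; rw [div_mul_cancel₀ _ hgne]; ring
    have key : ∀ y ∈ zzZono x a ∩ {y | g y = t}, f y ≤ f (zzPt x a (zzLam i S θ)) ∧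
        (f y = f (zzPt x a (zzLam i S θ)) → y = zzPt x a (zzLam i S θ)) := by
      rintro _ ⟨⟨l, hl, rfl⟩, hy⟩
      have hm := zz_max x a i S f hfi hf θ l hl
      refine ⟨hm.1, fun he => ?_⟩
      have h := hm.2 he
      have hll : l = zzLam i S (l i) := by
        ext j
        by_cases hj : j = i
        · subst hj; simp [zzLam]
        · rw [h j hj]; simp [zzLam, hj]
      have hy : g (zzPt x a l) = t := hy
      rw [hll, hgv] at hy
      rw [hgv] at hgt
      have : l i = θ := by
        apply mul_right_cancel₀ hgne; linarith
      rw [hll, this]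
    simp only
    rw [mem_extremePoints]
    refine ⟨⟨⟨_, zzLam_mem i S θ ⟨hth.1.le, hth.2.le⟩, rfl⟩, hgt⟩, ?_⟩
    rintro y1 hy1 y2 hy2 ⟨α, β, hα, hβ, hab, he⟩
    have k1 := key y1 hy1
    have k2 := key y2 hy2
    have hfe : α * f y1 + β * f y2 = f (zzPt x a (zzLam i S θ)) := by rw [← he]; simp
    set M := f (zzPt x a (zzLam i S θ))
    have hb : β = 1 - α := by linarith
    subst hb
    refine ⟨k1.2 (le_antisymm k1.1 ?_), k2.2 (le_antisymm k2.1 ?_)⟩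
    · by_contra hlt
      have := mul_pos hα (sub_pos.2 (not_le.1 hlt))
      have := mul_nonneg hβ.le (sub_nonneg.2 k2.1)
      nlinarith
    · by_contra hlt
      have := mul_pos hβ (sub_pos.2 (not_le.1 hlt))
      have := mul_nonneg hα.le (sub_nonneg.2 k1.1)
      nlinarith

theorem zz_injOn {E : Type*} [AddCommGroup E] [Module ℝ E] {n : ℕ} (x : E) (a : Fin n → E)
    (g : E →ₗ[ℝ] ℝ) (t : ℝ) :
    Set.InjOn (fun q : Fin n × Finset (Fin n) => zzPt x a (zzLam q.1 q.2 (zzTh x a g t q)))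
      {q | zzValid a q.1 q.2 ∧ zzTh x a g t q ∈ Set.Ioo (0:ℝ) 1} := by
  rintro ⟨i, S⟩ ⟨⟨hiS, f, hfi, hf⟩, hth⟩ ⟨i', S'⟩ ⟨⟨hiS', -⟩, hth'⟩ he
  simp only at *
  set θ := zzTh x a g t (i, S)
  set θ' := zzTh x a g t (i', S')
  have h := (zz_max x a i S f hfi hf θ (zzLam i' S' θ')
    (zzLam_mem i' S' θ' ⟨hth'.1.le, hth'.2.le⟩)).2 (by rw [he])
  have hii : i' = i := by
    by_contra hne
    have := h i' hne
    simp only [zzLam, hne, if_true, if_false] at this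
    split_ifs at this
    · exact absurd hth'.2 (by simp [this])
    · exact absurd hth'.1 (by simp [this])
  subst hii
  have : S = S' := by
    ext j
    by_cases hj : j = i'
    · subst hj; simp [hiS, hiS']
    · have := h j hj
      simp only [zzLam, hj, if_false] at this
      by_cases h1 : j ∈ S <;> by_cases h2 : j ∈ S' <;> simp [h1, h2] at this ⊢
  rw [this]

theorem zz_set_eq (c d : ℝ) : {t : ℝ | (t - c) / d ∈ Set.Ioo (0:ℝ) 1} =
    Set.Ioo (min c (c + d)) (max c (c + d)) := by
  ext t
  change (0 < (t - c) / d ∧ (t - c) / d < 1) ↔ _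
  simp only [Set.mem_Ioo]
  rcases lt_trichotomy d 0 with h | h | h
  · rw [min_eq_right (by linarith), max_eq_left (by linarith), div_lt_one_of_neg h, div_pos_iff]
    constructor
    · rintro ⟨h1 | h1, h2⟩
      · exact absurd h1.2 (by linarith)
      · exact ⟨by linarith, by linarith⟩
    · rintro ⟨h1, h2⟩
      exact ⟨Or.inr ⟨by linarith, h⟩, by linarith⟩
  · subst h
    simp only [div_zero, add_zero, min_self, max_self]
    constructor
    · rintro ⟨h1, h2⟩; exact absurd h1 (lt_irrefl _)
    · rintro ⟨h1, h2⟩; exact absurd h1 (by linarith)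
  · rw [min_eq_left (by linarith), max_eq_right (by linarith), div_lt_one h, div_pos_iff]
    constructor
    · rintro ⟨h1 | h1, h2⟩
      · exact ⟨by linarith, by linarith⟩
      · exact absurd h1.2 (by linarith)
    · rintro ⟨h1, h2⟩
      exact ⟨Or.inl ⟨by linarith, h⟩, by linarith⟩

open Classical MeasureTheory in
theorem zz_integral (c d lo hi : ℝ) (h1 : lo ≤ min c (c + d)) (h2 : max c (c + d) ≤ hi) :
    IntervalIntegrable (fun t : ℝ => if (t - c) / d ∈ Set.Ioo (0:ℝ) 1 then (1:ℝ) else 0) volume lo hi ∧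
    ∫ t in lo..hi, (if (t - c) / d ∈ Set.Ioo (0:ℝ) 1 then (1:ℝ) else 0) = |d| := by
  have hf : (fun t : ℝ => if (t - c) / d ∈ Set.Ioo (0:ℝ) 1 then (1:ℝ) else 0) =
      (Set.Ioo (min c (c + d)) (max c (c + d))).indicator 1 := by
    rw [← zz_set_eq]
    ext t
    simp [Set.indicator_apply]
  have hle : lo ≤ hi := h1.trans (min_le_max.trans h2)
  rw [hf]
  constructor
  · rw [intervalIntegrable_iff]
    have : IntegrableOn (fun _ : ℝ => (1:ℝ)) (Set.uIoc lo hi) volume :=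
      intervalIntegrable_iff.1 intervalIntegrable_const
    exact Integrable.indicator this measurableSet_Ioo
  · rw [intervalIntegral.integral_of_le hle, integral_indicator_one measurableSet_Ioo,
      measureReal_restrict_apply measurableSet_Ioo, Set.inter_eq_left.2, Real.volume_real_Ioo_of_le min_le_max]
    · rw [max_sub_min_eq_abs]; congr 1; ring
    · intro t ht
      exact ⟨h1.trans_lt ht.1, ht.2.le.trans h2⟩

open Classical in
theorem zz_card_valid (n : ℕ) (hn : 3 ≤ n) (a : Fin n → (Fin 3 → ℝ))
    (h3 : ∀ i j k : Fin n, i ≠ j → i ≠ k → j ≠ k →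
      LinearIndependent ℝ ![a i, a j, a k]) (i : Fin n) :
    ((Finset.univ : Finset (Finset (Fin n))).filter (fun S => zzValid a i S)).card
      = 2 * (n - 1) := by
  set W : Submodule ℝ (Module.Dual ℝ (Fin 3 → ℝ)) :=
    LinearMap.ker (Module.Dual.eval ℝ (Fin 3 → ℝ) (a i)) with hW
  have hWm : ∀ f, f ∈ W ↔ f (a i) = 0 := fun f => by simp [hW, LinearMap.mem_ker, Module.Dual.eval_apply]
  set φ : Fin n → W →ₗ[ℝ] ℝ := fun j => (Module.Dual.eval ℝ (Fin 3 → ℝ) (a j)).comp W.subtype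
  have hφ : ∀ j (w : W), φ j w = (w : Module.Dual ℝ (Fin 3 → ℝ)) (a j) := fun j w => rfl
  have hext : ∀ j k, i ≠ j → i ≠ k → j ≠ k → ∀ f f' : Module.Dual ℝ (Fin 3 → ℝ),
      f (a i) = f' (a i) → f (a j) = f' (a j) → f (a k) = f' (a k) → f = f' := by
    intro j k hij hik hjk f f' e1 e2 e3
    refine (basisOfLinearIndependentOfCardEqFinrank (h3 i j k hij hik hjk) (by simp)).ext ?_
    intro m
    simp only [coe_basisOfLinearIndependentOfCardEqFinrank]
    fin_cases m <;> simpa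
  have hex : ∀ j, i ≠ j → ∃ k, i ≠ k ∧ j ≠ k := by
    intro j hij
    have : ∃ k ∈ (Finset.univ : Finset (Fin n)), k ∉ ({i, j} : Finset (Fin n)) := by
      apply Finset.exists_mem_notMem_of_card_lt_card
      have := Finset.card_le_two (a := i) (b := j)
      simp; omega
    obtain ⟨k, -, hk⟩ := this
    simp at hk
    exact ⟨k, Ne.symm hk.1, Ne.symm hk.2⟩
  have hdual : ∀ j k, i ≠ j → i ≠ k → j ≠ k → ∃ f : Module.Dual ℝ (Fin 3 → ℝ),
      f (a i) = 0 ∧ f (a j) = 0 ∧ f (a k) = 1 := by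
    intro j k hij hik hjk
    set b := basisOfLinearIndependentOfCardEqFinrank (h3 i j k hij hik hjk) (by simp) with hb
    have hbm : ⇑b = ![a i, a j, a k] := coe_basisOfLinearIndependentOfCardEqFinrank _ _
    have e0 : a i = b 0 := by simp [hbm]
    have e1 : a j = b 1 := by simp [hbm]
    have e2 : a k = b 2 := by simp [hbm]
    refine ⟨b.coord 2, ?_, ?_, ?_⟩
    · rw [e0]; simp
    · rw [e1]; simp
    · rw [e2]; simp
  have c1 : (Finset.univ.erase i).Nonempty := by
    rw [← Finset.card_pos, Finset.card_erase_of_mem (Finset.mem_univ _)]; simp; omega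
  have c2 : ∀ j ∈ Finset.univ.erase i, ∃ w : W, φ j w ≠ 0 := by
    intro j hj
    have hij : i ≠ j := (Finset.ne_of_mem_erase hj).symm
    obtain ⟨k, hik, hjk⟩ := hex j hij
    obtain ⟨f, f1, f2, f3⟩ := hdual k j hik hij hjk.symm
    exact ⟨⟨f, (hWm f).2 f1⟩, by rw [hφ]; simp [f3]⟩
  have c3 : ∀ j ∈ Finset.univ.erase i, ∃ w : W, φ j w = 0 ∧
      (∀ k ∈ Finset.univ.erase i, k ≠ j → φ k w ≠ 0) ∧
      ∀ w' : W, φ j w' = 0 → ∃ c : ℝ, w' = c • w := by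
    intro j hj
    have hij : i ≠ j := (Finset.ne_of_mem_erase hj).symm
    obtain ⟨k, hik, hjk⟩ := hex j hij
    obtain ⟨f, f1, f2, f3⟩ := hdual j k hij hik hjk
    refine ⟨⟨f, (hWm f).2 f1⟩, f2, ?_, ?_⟩
    · intro m hm hmj h0
      have him : i ≠ m := (Finset.ne_of_mem_erase hm).symm
      have h0 : f (a m) = 0 := h0
      have := hext j m hij him hmj.symm f 0 (by simp [f1]) (by simp [f2]) (by simp [h0])
      rw [this] at f3
      simp at f3
    · rintro ⟨f', hf'⟩ h0
      have h0 : f' (a j) = 0 := h0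
      have hf' := (hWm _).1 hf'
      refine ⟨f' (a k), Subtype.ext ?_⟩
      exact hext j k hij hik hjk _ _ (by simp [f1, hf']) (by simp [f2, h0]) (by simp [f3])
  have hc := zz_count (W := ↥W) φ (Finset.univ.erase i) c1 c2 c3
  rw [Finset.card_erase_of_mem (Finset.mem_univ _), Finset.card_univ, Fintype.card_fin] at hc
  rw [← hc]
  congr 1
  ext S
  simp only [Finset.mem_filter, Finset.mem_univ, true_and, Finset.mem_powerset]
  constructor
  · rintro ⟨hi, f, hf, h⟩
    refine ⟨fun j hj => ?_, ⟨f, (hWm f).2 hf⟩, fun j hj => h j (Finset.ne_of_mem_erase hj)⟩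
    simp only [Finset.mem_erase, Finset.mem_univ, and_true]
    rintro rfl; exact hi hj
  · rintro ⟨hS, ⟨f, hf⟩, h⟩
    refine ⟨fun hi => by simpa using hS hi, f, (hWm f).1 hf, fun j hj => h j (by simp [hj])⟩

theorem zz_P_eq {E : Type*} [AddCommGroup E] [Module ℝ E] {n : ℕ} (x : E) (a : Fin n → E) :
    ({x} + ∑ i, segment ℝ 0 (a i) : Set E) = zzZono x a := by
  ext p
  rw [Set.singleton_add, Set.mem_image]
  constructor
  · rintro ⟨q, hq, rfl⟩
    obtain ⟨s, hs, rfl⟩ := (Set.mem_fintype_sum _ _).1 hq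
    simp only [segment_eq_image, Set.mem_image] at hs
    choose l hl hl' using hs
    refine ⟨l, hl, ?_⟩
    simp only [zzPt]
    congr 1
    exact Finset.sum_congr rfl (fun j _ => by rw [← hl' j]; simp)
  · rintro ⟨l, hl, rfl⟩
    refine ⟨∑ j, l j • a j, (Set.mem_fintype_sum _ _).2 ⟨fun j => l j • a j, fun j => ?_, rfl⟩, rfl⟩
    rw [segment_eq_image]
    exact ⟨l j, hl j, by simp⟩

def zzDot (z : Fin 3 → ℝ) : (Fin 3 → ℝ) →ₗ[ℝ] ℝ where
  toFun := dotp z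
  map_add' u v := by simp [dotp, mul_add, Finset.sum_add_distrib]
  map_smul' c u := by simp [dotp, Finset.mul_sum, mul_left_comm]

theorem zz_gPt {E : Type*} [AddCommGroup E] [Module ℝ E] {n : ℕ} (x : E) (a : Fin n → E)
    (g : E →ₗ[ℝ] ℝ) (l : Fin n → ℝ) : g (zzPt x a l) = g x + ∑ j, l j * g (a j) := by
  simp [zzPt, map_sum]

theorem zz_bd (l d : ℝ) (h : l ∈ Set.Icc (0:ℝ) 1) : min d 0 ≤ l * d ∧ l * d ≤ max d 0 := by
  obtain ⟨h0, h1⟩ := h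
  rcases le_total d 0 with hd | hd
  · rw [min_eq_left hd, max_eq_right hd]
    constructor <;> nlinarith
  · rw [min_eq_right hd, max_eq_left hd]
    constructor <;> nlinarith

theorem zz_bounds {n : ℕ} (x : Fin 3 → ℝ) (a : Fin n → (Fin 3 → ℝ)) (z : Fin 3 → ℝ) :
    IsLeast (dotp z '' zzZono x a) (zzDot z x + ∑ j, min (zzDot z (a j)) 0) ∧
    IsGreatest (dotp z '' zzZono x a) (zzDot z x + ∑ j, max (zzDot z (a j)) 0) := by
  refine ⟨⟨?_, ?_⟩, ?_, ?_⟩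
  · refine ⟨_, ⟨fun j => if zzDot z (a j) ≤ 0 then 1 else 0, fun j => ?_, rfl⟩, ?_⟩
    · dsimp only
      split_ifs <;> simp
    · show zzDot z _ = _
      rw [zz_gPt]
      congr 1
      refine Finset.sum_congr rfl (fun j _ => ?_)
      split_ifs with h
      · rw [min_eq_left h]; simp
      · rw [min_eq_right (not_le.1 h).le]; simp
  · rintro _ ⟨_, ⟨l, hl, rfl⟩, rfl⟩
    show _ ≤ zzDot z _
    rw [zz_gPt]
    gcongr with j
    exact (zz_bd _ _ (hl j)).1
  · refine ⟨_, ⟨fun j => if zzDot z (a j) ≤ 0 then 0 else 1, fun j => ?_, rfl⟩, ?_⟩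
    · dsimp only
      split_ifs <;> simp
    · show zzDot z _ = _
      rw [zz_gPt]
      congr 1
      refine Finset.sum_congr rfl (fun j _ => ?_)
      split_ifs with h
      · rw [max_eq_right h]; simp
      · rw [max_eq_left (not_le.1 h).le]; simp
  · rintro _ ⟨_, ⟨l, hl, rfl⟩, rfl⟩
    show zzDot z _ ≤ _
    rw [zz_gPt]
    gcongr with j
    exact (zz_bd _ _ (hl j)).2

/-- If `P ⊂ ℝ³` is a zonotope with `n ≥ 3` generators any three of
which are linearly independent, then `A(P,z) = 2(n-1)` for every nonzero `z`. -/
theorem zonotope_avgVert_eq (n : ℕ) (hn : 3 ≤ n) (a : Fin n → (Fin 3 → ℝ))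
    (h3 : ∀ i j k : Fin n, i ≠ j → i ≠ k → j ≠ k →
      LinearIndependent ℝ ![a i, a j, a k])
    (x : Fin 3 → ℝ) (P : Set (Fin 3 → ℝ))
    (hP : P = {x} + ∑ i, segment ℝ 0 (a i))
    (z : Fin 3 → ℝ) (hz : z ≠ 0) :
    avgVert P z = 2 * ((n : ℝ) - 1) := by
  classical
  rw [zz_P_eq] at hP
  set g := zzDot z with hg
  have hdot : ∀ y, dotp z y = g y := fun _ => rfl
  obtain ⟨hmin, hmax⟩ := zz_bounds x a z
  rw [← hP] at hmin hmax
  have htmin : tMin P z = g x + ∑ j, min (g (a j)) 0 := hmin.csInf_eq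
  have htmax : tMax P z = g x + ∑ j, max (g (a j)) 0 := hmax.csSup_eq
  have hdiff : tMax P z - tMin P z = ∑ j, |g (a j)| := by
    rw [htmin, htmax, add_sub_add_left_eq_sub, ← Finset.sum_sub_distrib]
    refine Finset.sum_congr rfl (fun j _ => ?_)
    rw [max_sub_min_eq_abs']; simp
  have h2 : ∀ i j, i ≠ j → ∀ α β : ℝ, α • a i + β • a j = 0 → α = 0 ∧ β = 0 := by
    intro i j hij α β h
    obtain ⟨k, -, hk⟩ : ∃ k ∈ (Finset.univ : Finset (Fin n)), k ∉ ({i, j} : Finset (Fin n)) := by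
      apply Finset.exists_mem_notMem_of_card_lt_card
      have := Finset.card_le_two (a := i) (b := j)
      simp; omega
    simp at hk
    have hli := h3 i j k hij (Ne.symm hk.1) (Ne.symm hk.2)
    rw [Fintype.linearIndependent_iff] at hli
    have := hli ![α, β, 0] (by simpa [Fin.sum_univ_three] using h)
    exact ⟨this 0, this 1⟩
  have hpos : 0 < ∑ j, |g (a j)| := by
    refine lt_of_le_of_ne (Finset.sum_nonneg (fun j _ => abs_nonneg _)) (fun h => hz ?_)
    have h0 := (Finset.sum_eq_zero_iff_of_nonneg (fun j _ => abs_nonneg (g (a j)))).1 h.symm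
    have h0 : ∀ j, g (a j) = 0 := fun j => by simpa using h0 j (Finset.mem_univ _)
    have hg0 : g = 0 := by
      refine (basisOfLinearIndependentOfCardEqFinrank
        (h3 ⟨0, by omega⟩ ⟨1, by omega⟩ ⟨2, by omega⟩ (by simp) (by simp) (by simp)) (by simp)).ext ?_
      intro m
      simp only [coe_basisOfLinearIndependentOfCardEqFinrank]
      fin_cases m <;> simp [h0]
    ext m
    have : g (Pi.single m 1) = 0 := by rw [hg0]; rfl
    rw [← hdot] at this
    simpa [dotp, Pi.single_apply] using this
  set V := (Finset.univ : Finset (Fin n × Finset (Fin n))).filter (fun q => zzValid a q.1 q.2) with hV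
  have hcount : ∀ t, t ∉ Set.range (fun S : Finset (Fin n) =>
      g (zzPt x a (fun j => if j ∈ S then 1 else 0))) →
      (nVert (P ∩ {y | dotp z y = t}) : ℝ) =
        ∑ q ∈ V, if zzTh x a g t q ∈ Set.Ioo (0:ℝ) 1 then (1:ℝ) else 0 := by
    intro t ht
    have := zz_ext_eq x a g t h2 ht
    have hs : P ∩ {y | dotp z y = t} = zzZono x a ∩ {y | g y = t} := by rw [hP]; rfl
    unfold nVert
    rw [hs, this, (zz_injOn x a g t).ncard_image, Finset.sum_boole, ← Set.ncard_coe_finset]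
    congr 2
    ext q
    simp [hV]
  have hint : ∫ t in tMin P z..tMax P z, (nVert (P ∩ {y | dotp z y = t}) : ℝ)
      = ∫ t in tMin P z..tMax P z, ∑ q ∈ V,
        if zzTh x a g t q ∈ Set.Ioo (0:ℝ) 1 then (1:ℝ) else 0 := by
    apply intervalIntegral.integral_congr_ae
    have hfin : (Set.range (fun S : Finset (Fin n) =>
      g (zzPt x a (fun j => if j ∈ S then 1 else 0)))).Finite := Set.finite_range _
    filter_upwards [hfin.countable.ae_notMem MeasureTheory.volume] with t ht _
    exact hcount t ht
  have hterm : ∀ q ∈ V, IntervalIntegrable (fun t : ℝ => if zzTh x a g t q ∈ Set.Ioo (0:ℝ) 1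
      then (1:ℝ) else 0) MeasureTheory.volume (tMin P z) (tMax P z) ∧
      ∫ t in tMin P z..tMax P z, (if zzTh x a g t q ∈ Set.Ioo (0:ℝ) 1 then (1:ℝ) else 0)
        = |g (a q.1)| := by
    rintro ⟨i, S⟩ -
    have hmem : ∀ s ∈ Set.Icc (0:ℝ) 1,
        g (zzPt x a (zzLam i S 0)) + s * g (a i) ∈ dotp z '' P := by
      intro s hs
      refine ⟨zzPt x a (zzLam i S s), ?_, ?_⟩
      · rw [hP]; exact ⟨_, zzLam_mem i S s hs, rfl⟩
      · rw [hdot, zzPt_lam]; simp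
    have m0 := hmem 0 (by simp)
    have m1 := hmem 1 (by simp)
    rw [zero_mul, add_zero] at m0
    rw [one_mul] at m1
    apply zz_integral
    · rw [htmin]; exact le_min (hmin.2 m0) (hmin.2 m1)
    · rw [htmax]; exact max_le (hmax.2 m0) (hmax.2 m1)
  have hsum : ∑ q ∈ V, |g (a q.1)| = 2 * ((n:ℝ) - 1) * ∑ j, |g (a j)| := by
    rw [hV, Finset.sum_filter, ← Finset.univ_product_univ, Finset.sum_product, Finset.mul_sum]
    refine Finset.sum_congr rfl (fun i _ => ?_)
    simp only
    rw [← Finset.sum_filter, Finset.sum_const, zz_card_valid n hn a h3 i, nsmul_eq_mul]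
    push_cast [Nat.cast_sub (show 1 ≤ n by omega)]
    ring
  unfold avgVert
  rw [hint, intervalIntegral.integral_finsetSum (fun q hq => (hterm q hq).1),
    Finset.sum_congr rfl (fun q hq => (hterm q hq).2), hsum, hdiff]
  field_simp
end
end

section
/- Let P ⊂ ℝ³ be a centrally symmetric convex polytope with nonempty interior and let λ ∈ ℝ. Then A(P,z) = λ for every nonzero z ∈ ℝ³ if and only if P is a zonotope, i.e. there exist pairwise linearly independent nonzero vectors V = {v_1, …, v_n} spanning ℝ³ and a point x with P = x + ∑_{i=1}^n [0, v_i], such that 2·deg v = λ for every v ∈ V in the hypergraph ℱ. -/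
open scoped Pointwise BigOperators

noncomputable section

section PartOne

variable {E : Type*} [NormedAddCommGroup E] [NormedSpace ℝ E]

lemma seg_param {u w p : E} : p ∈ segment ℝ u w ↔ ∃ r : ℝ, 0 ≤ r ∧ r ≤ 1 ∧ p = u + r • (w - u) := by
  rw [segment_eq_image']
  constructor
  · rintro ⟨r, ⟨h0, h1⟩, rfl⟩
    exact ⟨r, h0, h1, rfl⟩
  · rintro ⟨r, h0, h1, rfl⟩
    exact ⟨r, ⟨h0, h1⟩, rfl⟩

lemma oseg_param {u w p : E} :
    p ∈ openSegment ℝ u w ↔ ∃ r : ℝ, 0 < r ∧ r < 1 ∧ p = u + r • (w - u) := by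
  rw [openSegment_eq_image']
  constructor
  · rintro ⟨r, ⟨h0, h1⟩, rfl⟩
    exact ⟨r, h0, h1, rfl⟩
  · rintro ⟨r, h0, h1, rfl⟩
    exact ⟨r, ⟨h0, h1⟩, rfl⟩

lemma left_ext_seg (u w : E) : u ∈ Set.extremePoints ℝ (segment ℝ u w) := by
  refine ⟨left_mem_segment _ _ _, ?_⟩
  intro p hp q hq h
  by_cases huw : u = w
  · subst huw; simpa using hp
  obtain ⟨a, a0, a1, rfl⟩ := seg_param.1 hp
  obtain ⟨b, b0, b1, rfl⟩ := seg_param.1 hq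
  obtain ⟨r, r0, r1, h⟩ := oseg_param.1 h
  have hd : w - u ≠ 0 := sub_ne_zero.2 (Ne.symm huw)
  have : (a + r * (b - a)) • (w - u) = 0 := by
    have h2 : u = u + (a + r * (b - a)) • (w - u) := by
      conv_lhs => rw [h]
      module
    simpa using h2
  have h3 := (smul_eq_zero.1 this).resolve_right hd
  have h4 : a = 0 := by nlinarith [mul_nonneg r0.le b0, mul_nonneg (sub_nonneg.2 r1.le) a0]
  simp [h4]

lemma right_ext_seg (u w : E) : w ∈ Set.extremePoints ℝ (segment ℝ u w) := by
  rw [segment_symm]; exact left_ext_seg w u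

/-- directions in which one can move both ways -/
def TwoWay (P : Set E) (x d : E) : Prop := ∃ ε : ℝ, 0 < ε ∧ x + ε • d ∈ P ∧ x - ε • d ∈ P

lemma TwoWay.add {P : Set E} (hc : Convex ℝ P) {x d e : E} (h1 : TwoWay P x d)
    (h2 : TwoWay P x e) : TwoWay P x (d + e) := by
  obtain ⟨a, a0, ha, ha'⟩ := h1
  obtain ⟨b, b0, hb, hb'⟩ := h2
  have hab : a + b ≠ 0 := by positivity
  refine ⟨a * b / (a + b), by positivity, ?_, ?_⟩
  · have := hc ha hb (a := b / (a + b)) (b := a / (a + b)) (by positivity) (by positivity)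
      (by field_simp; ring)
    convert this using 1
    have h3 : b / (a + b) = 1 - a / (a+b) := by field_simp; ring
    have h4 : a * b / (a+b) = a - a * (a / (a+b)) := by field_simp; ring
    have h5 : (a / (a + b)) * b = a * b / (a+b) := by ring
    have h6 : (b / (a + b)) * a = a * b / (a+b) := by ring
    rw [smul_add, smul_add, smul_add, smul_smul, smul_smul, h5, h6, h3]
    module
  · have := hc ha' hb' (a := b / (a + b)) (b := a / (a + b)) (by positivity) (by positivity)
      (by field_simp; ring)
    convert this using 1
    have h3 : b / (a + b) = 1 - a / (a+b) := by field_simp; ring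
    have h5 : (a / (a + b)) * b = a * b / (a+b) := by ring
    have h6 : (b / (a + b)) * a = a * b / (a+b) := by ring
    rw [smul_add, smul_sub, smul_sub, smul_smul, smul_smul, h5, h6, h3]
    module

lemma TwoWay.smul {P : Set E} {x d : E} (h1 : TwoWay P x d) (c : ℝ) (hx : x ∈ P) :
    TwoWay P x (c • d) := by
  obtain ⟨a, a0, ha, ha'⟩ := h1
  rcases lt_trichotomy c 0 with h | h | h
  · have hc0 := h.ne
    refine ⟨a / (-c), div_pos a0 (by linarith), ?_, ?_⟩
    · rw [smul_smul]
      have : a / (-c) * c = -a := by field_simp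
      rw [this]; simpa [sub_eq_add_neg] using ha'
    · rw [smul_smul]
      have : a / (-c) * c = -a := by field_simp
      rw [this]; simpa [sub_eq_add_neg] using ha
  · subst h
    exact ⟨1, one_pos, by simpa using hx, by simpa using hx⟩
  · refine ⟨a / c, by positivity, ?_, ?_⟩
    · rw [smul_smul, div_mul_cancel₀ _ h.ne']; exact ha
    · rw [smul_smul, div_mul_cancel₀ _ h.ne']; exact ha'

lemma twoWay_of_oseg {P : Set E} (hc : Convex ℝ P) {p q x : E} (hp : p ∈ P) (hq : q ∈ P)
    (hx : x ∈ openSegment ℝ p q) : TwoWay P x (q - p) := by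
  obtain ⟨r, r0, r1, rfl⟩ := oseg_param.1 hx
  have key : ∀ c : ℝ, 0 ≤ c → c ≤ 1 → p + c • (q - p) ∈ P := fun c h0 h1 =>
    hc.segment_subset hp hq (seg_param.2 ⟨c, h0, h1, rfl⟩)
  refine ⟨min r (1 - r), lt_min r0 (by linarith), ?_, ?_⟩
  · rw [add_assoc, ← add_smul]
    exact key _ (add_nonneg r0.le (le_min r0.le (by linarith)))
      (by linarith [min_le_right r (1 - r)])
  · rw [add_sub_assoc, ← sub_smul]
    exact key _ (by linarith [min_le_left r (1 - r)])
      (by linarith [le_min r0.le (show 0 ≤ 1 - r by linarith)])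

/-- moving `TwoWay` from `p` to `x` when x is strictly between `p` and a point of P -/
lemma TwoWay.transfer {P : Set E} (hc : Convex ℝ P) {p q x e : E} (hq : q ∈ P)
    (hx : x ∈ openSegment ℝ p q) (h : TwoWay P p e) : TwoWay P x e := by
  obtain ⟨ε, ε0, h1, h2⟩ := h
  obtain ⟨a, b, a0, b0, hab, rfl⟩ := hx
  refine ⟨a * ε, by positivity, ?_, ?_⟩
  · convert hc h1 hq a0.le b0.le hab using 1
    module
  · convert hc h2 hq a0.le b0.le hab using 1
    module

lemma ext_section_exists [FiniteDimensional ℝ E] {P : Set E} (hc : Convex ℝ P) (hk : IsCompact P)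
    (f : E →ₗ[ℝ] ℝ) (t : ℝ) (hno : ∀ p ∈ Set.extremePoints ℝ P, f p ≠ t) (x : E)
    (hx : x ∈ Set.extremePoints ℝ (P ∩ {x | f x = t})) :
    ∃ u w, f u < t ∧ t < f w ∧ IsExtreme ℝ P (segment ℝ u w) ∧ x ∈ segment ℝ u w := by
  obtain ⟨⟨hxP, hxt⟩, hxe⟩ := hx
  simp only [Set.mem_ofPred_eq] at hxt
  have hkey : ∀ e, TwoWay P x e → f e = 0 → e = 0 := by
    rintro e ⟨ε, ε0, h1, h2⟩ he
    have := hxe (x₁ := x + ε • e) ⟨h1, by simp [he, hxt]⟩ (x₂ := x - ε • e) ⟨h2, by simp [he, hxt]⟩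
      ⟨1/2, 1/2, by norm_num, by norm_num, by norm_num, by module⟩
    simpa [ε0.ne'] using this
  have hxn : x ∉ Set.extremePoints ℝ P := fun h => hno x h hxt
  obtain ⟨d, hd, hfd⟩ : ∃ d, TwoWay P x d ∧ 0 < f d := by
    have : ∃ d, TwoWay P x d ∧ d ≠ 0 := by
      by_contra hcon
      push Not at hcon
      apply hxn
      refine ⟨hxP, fun p hp q hq h => ?_⟩
      have h0 := hcon _ (twoWay_of_oseg hc hp hq h)
      obtain ⟨r, r0, r1, rfl⟩ := oseg_param.1 h
      rw [h0]; simp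
    obtain ⟨d, hd, hd0⟩ := this
    rcases lt_trichotomy (f d) 0 with h | h | h
    · exact ⟨(-1 : ℝ) • d, hd.smul _ hxP, by simpa using h⟩
    · exact absurd (hkey d hd h) hd0
    · exact ⟨d, hd, h⟩
  have hd0 : d ≠ 0 := by rintro rfl; simp at hfd
  set g : ℝ → E := fun r => x + r • d with hg
  have hgc : Continuous g := by fun_prop
  set K : Set ℝ := g ⁻¹' P with hK
  have hKclosed : IsClosed K := hk.isClosed.preimage hgc
  have hfg : ∀ r, f (g r) = t + r * f d := fun r => by simp [hg, hxt]
  have hfc : Continuous f := f.continuous_of_finiteDimensional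
  have hKb : Bornology.IsBounded K := by
    obtain ⟨C, hC⟩ := (hk.image hfc).isBounded.exists_norm_le
    rw [isBounded_iff_forall_norm_le]
    refine ⟨(C + |t|) / f d, fun r hr => ?_⟩
    have := hC (f (g r)) ⟨_, hr, rfl⟩
    rw [hfg, Real.norm_eq_abs] at this
    rw [le_div_iff₀ hfd, Real.norm_eq_abs]
    have h2 : |r| * f d = |r * f d| := by rw [abs_mul, abs_of_pos hfd]
    rw [h2]
    have := abs_sub_abs_le_abs_sub (r * f d) (-t)
    rw [abs_neg, sub_neg_eq_add, add_comm (r * f d)] at this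
    linarith
  have hKk : IsCompact K := Metric.isCompact_of_isClosed_isBounded hKclosed hKb
  have h0K : (0 : ℝ) ∈ K := by simpa [hK, hg] using hxP
  obtain ⟨b, hbK, hb⟩ := hKk.exists_isGreatest ⟨0, h0K⟩
  obtain ⟨a, haK, ha⟩ := hKk.exists_isLeast ⟨0, h0K⟩
  obtain ⟨ε, ε0, he1, he2⟩ := hd
  have hb0 : 0 < b := lt_of_lt_of_le ε0 (hb (show ε ∈ K from he1))
  have ha0 : a < 0 := lt_of_le_of_lt (ha (show -ε ∈ K by simpa [hK, hg, sub_eq_add_neg] using he2))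
    (by linarith)
  have hmem : ∀ r, a ≤ r → r ≤ b → g r ∈ segment ℝ (g a) (g b) := by
    intro r h1 h2
    refine seg_param.2 ⟨(r - a) / (b - a), div_nonneg (by linarith) (by linarith),
      (div_le_one (by linarith)).2 (by linarith), ?_⟩
    have h3 : g b - g a = (b - a) • d := by simp only [hg]; module
    rw [h3, smul_smul, div_mul_cancel₀ _ (by linarith)]
    simp only [hg]; module
  have hsub : segment ℝ (g a) (g b) ⊆ P := hc.segment_subset haK hbK
  have hmem' : ∀ p ∈ segment ℝ (g a) (g b), ∃ r, a ≤ r ∧ r ≤ b ∧ p = g r := by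
    intro p hp
    obtain ⟨r, r0, r1, rfl⟩ := seg_param.1 hp
    refine ⟨a + r * (b - a), by nlinarith, by nlinarith, ?_⟩
    simp only [hg]; module
  refine ⟨g a, g b, ?_, ?_, ⟨hsub, ?_⟩, ?_⟩
  · rw [hfg]; nlinarith
  · rw [hfg]; nlinarith
  · intro q1 hq1 q2 hq2 p hp hpo
    obtain ⟨r, hr1, hr2, rfl⟩ := hmem' p hp
    have hT : TwoWay P (g r) (q2 - q1) := twoWay_of_oseg hc hq1 hq2 hpo
    have hTx : TwoWay P x (q2 - q1) := by
      rcases lt_trichotomy r 0 with h | h | h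
      · refine hT.transfer hc hbK (oseg_param.2 ⟨(-r)/(b - r), by
          apply div_pos <;> linarith, by rw [div_lt_one (by linarith)]; linarith, ?_⟩)
        have h3 : g b - g r = (b - r) • d := by simp only [hg]; module
        rw [h3, smul_smul, div_mul_cancel₀ _ (by linarith)]
        simp only [hg]; module
      · subst h; simpa [hg] using hT
      · refine hT.transfer hc haK (oseg_param.2 ⟨(r)/(r - a), by
          apply div_pos <;> linarith, by rw [div_lt_one (by linarith)]; linarith, ?_⟩)
        have h3 : g a - g r = -(r - a) • d := by simp only [hg]; module
        rw [h3, smul_smul, mul_neg, div_mul_cancel₀ _ (by linarith)]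
        simp only [hg]; module
    have h0 := hkey ((q2 - q1) + (-(f (q2 - q1) / f d)) • d)
      (hTx.add hc (TwoWay.smul ⟨ε, ε0, he1, he2⟩ _ hxP)) (by
        rw [map_add, map_smul, smul_eq_mul]; field_simp; ring)
    set c := f (q2 - q1) / f d
    have h1 : q2 - q1 = c • d := by
      rw [neg_smul] at h0; exact add_neg_eq_zero.1 h0
    obtain ⟨θ, θ0, θ1, hθ⟩ := oseg_param.1 hpo
    have h2 : q1 = g (r - θ * c) := by
      rw [h1] at hθ
      have : q1 = g r - θ • c • d := by rw [hθ]; abel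
      rw [this]; simp only [hg]; module
    have h3 : r - θ * c ∈ K := by rw [hK, Set.mem_preimage, ← h2]; exact hq1
    rw [h2]
    exact hmem _ (ha h3) (hb h3)
  · have := hmem 0 ha0.le hb0.le
    simpa [hg] using this

end PartOne
section PartTwo

/-- `dotp z` as a linear map -/
def dotpL {d : ℕ} (z : Fin d → ℝ) : (Fin d → ℝ) →ₗ[ℝ] ℝ where
  toFun := dotp z
  map_add' x y := by simp [dotp, mul_add, Finset.sum_add_distrib]
  map_smul' c x := by
    simp only [dotp, Pi.smul_apply, smul_eq_mul, RingHom.id_apply, Finset.mul_sum]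
    exact Finset.sum_congr rfl fun i _ => by ring

lemma dotpL_apply {d : ℕ} (z x : Fin d → ℝ) : dotpL z x = dotp z x := rfl

open Classical in
/-- ordered edges -/
def edgeSet (s : Finset (Fin 3 → ℝ)) (P : Set (Fin 3 → ℝ)) :
    Finset ((Fin 3 → ℝ) × (Fin 3 → ℝ)) :=
  (s ×ˢ s).filter (fun e => e.1 ≠ e.2 ∧ IsExtreme ℝ P (segment ℝ e.1 e.2))

lemma mem_edgeSet {s : Finset (Fin 3 → ℝ)} {P : Set (Fin 3 → ℝ)}
    (hP : P = convexHull ℝ (s : Set (Fin 3 → ℝ))) {u w : Fin 3 → ℝ} :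
    (u, w) ∈ edgeSet s P ↔ u ≠ w ∧ IsExtreme ℝ P (segment ℝ u w) := by
  classical
  simp only [edgeSet, Finset.mem_filter, Finset.mem_product]
  constructor
  · rintro ⟨_, h⟩; exact h
  · rintro ⟨h1, h2⟩
    have h3 := h2.extremePoints_subset_extremePoints
    have h4 : Set.extremePoints ℝ P ⊆ s := by rw [hP]; exact extremePoints_convexHull_subset
    exact ⟨⟨h4 (h3 (left_ext_seg u w)), h4 (h3 (right_ext_seg u w))⟩, h1, h2⟩

lemma edge_unique {P : Set (Fin 3 → ℝ)} (f : (Fin 3 → ℝ) →ₗ[ℝ] ℝ) {u w u' w' x : Fin 3 → ℝ} {t : ℝ}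
    (h : IsExtreme ℝ P (segment ℝ u w)) (h' : IsExtreme ℝ P (segment ℝ u' w'))
    (hx : x ∈ openSegment ℝ u w) (hx' : x ∈ openSegment ℝ u' w')
    (h1 : f u < t) (h2 : t < f w) (h1' : f u' < t) (h2' : t < f w') : u = u' ∧ w = w' := by
  have e1 := h.extremePoints_subset_extremePoints
  have huP := h.1 (left_mem_segment ℝ u w)
  have hwP := h.1 (right_mem_segment ℝ u w)
  have hu := h'.2 huP hwP (openSegment_subset_segment ℝ _ _ hx') hx
  have hw := h'.right_mem_of_mem_openSegment huP hwP (openSegment_subset_segment ℝ _ _ hx') hx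
  have hsub := h'.1
  have key : ∀ p ∈ Set.extremePoints ℝ P, p ∈ segment ℝ u' w' → p = u' ∨ p = w' := by
    intro p hp hps
    have := (mem_extremePoints_iff_forall_segment.1 hp).2 u' (hsub (left_mem_segment ℝ u' w')) w'
      (hsub (right_mem_segment ℝ u' w')) hps
    rcases this with h | h
    · exact Or.inl h.symm
    · exact Or.inr h.symm
  constructor
  · rcases key u (e1 (left_ext_seg u w)) hu with h | h
    · exact h
    · rw [h] at h1; linarith
  · rcases key w (e1 (right_ext_seg u w)) hw with h | h
    · rw [h] at h2; linarith
    · exact h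

lemma nVert_section {s : Finset (Fin 3 → ℝ)} {P : Set (Fin 3 → ℝ)}
    (hP : P = convexHull ℝ (s : Set (Fin 3 → ℝ))) (z : Fin 3 → ℝ) (t : ℝ)
    (ht : ∀ p ∈ s, dotp z p ≠ t) :
    nVert (P ∩ {x | dotp z x = t}) =
      ((edgeSet s P).filter (fun e => dotp z e.1 < t ∧ t < dotp z e.2)).card := by
  classical
  have hc : Convex ℝ P := by rw [hP]; exact convex_convexHull _ _
  have hk : IsCompact P := by rw [hP]; exact s.finite_toSet.isCompact_convexHull (𝕜 := ℝ)
  set φ : (Fin 3 → ℝ) × (Fin 3 → ℝ) → (Fin 3 → ℝ) := fun e =>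
    e.1 + ((t - dotp z e.1) / (dotp z e.2 - dotp z e.1)) • (e.2 - e.1) with hφ
  set F := (edgeSet s P).filter (fun e => dotp z e.1 < t ∧ t < dotp z e.2) with hF
  have hlin : ∀ (u w : Fin 3 → ℝ) (r : ℝ),
      dotp z (u + r • (w - u)) = dotp z u + r * (dotp z w - dotp z u) := by
    intro u w r
    simp only [← dotpL_apply, map_add, map_smul, map_sub, smul_eq_mul]
  have hφo : ∀ u w, dotp z u < t → t < dotp z w → φ (u, w) ∈ openSegment ℝ u w := by
    intro u w h1 h2
    refine oseg_param.2 ⟨_, ?_, ?_, rfl⟩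
    · apply div_pos <;> simp only <;> linarith
    · simp only; rw [div_lt_one] <;> linarith
  have hφu : ∀ u w, dotp z u < t → t < dotp z w → ∀ x ∈ segment ℝ u w, dotp z x = t →
      x = φ (u, w) := by
    intro u w h1 h2 x hx hxt
    obtain ⟨r, r0, r1, rfl⟩ := seg_param.1 hx
    rw [hlin] at hxt
    have : r = (t - dotp z u) / (dotp z w - dotp z u) := by
      rw [eq_div_iff (by linarith)]; linarith
    rw [hφ, this]
  have hφt : ∀ u w, dotp z u < t → t < dotp z w → dotp z (φ (u, w)) = t := by
    intro u w h1 h2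
    rw [hφ]; simp only
    rw [hlin, div_mul_cancel₀ _ (by linarith)]; ring
  have himg : Set.extremePoints ℝ (P ∩ {x | dotp z x = t}) = ((F.image φ : Finset _) : Set _) := by
    ext x
    simp only [Finset.coe_image, Set.mem_image, Finset.mem_coe]
    constructor
    · intro hx
      have hno : ∀ p ∈ Set.extremePoints ℝ P, dotpL z p ≠ t := by
        intro p hp
        apply ht
        rw [hP] at hp
        exact extremePoints_convexHull_subset hp
      obtain ⟨u, w, h1, h2, h3, h4⟩ := ext_section_exists hc hk (dotpL z) t hno x hx
      refine ⟨(u, w), ?_, (hφu u w h1 h2 x h4 hx.1.2).symm⟩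
      rw [hF, Finset.mem_filter, mem_edgeSet hP]
      refine ⟨⟨?_, h3⟩, h1, h2⟩
      rintro rfl
      exact absurd (h1.trans h2) (lt_irrefl _)
    · rintro ⟨⟨u, w⟩, he, rfl⟩
      rw [hF, Finset.mem_filter, mem_edgeSet hP] at he
      obtain ⟨⟨hne, hE⟩, h1, h2⟩ := he
      have hseg := openSegment_subset_segment ℝ _ _ (hφo u w h1 h2)
      refine ⟨⟨hE.1 hseg, hφt u w h1 h2⟩, ?_⟩
      intro p hp q hq hpq
      have := hE.2 hp.1 hq.1 hseg hpq
      exact hφu u w h1 h2 p this hp.2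
  rw [nVert, himg, Set.ncard_coe_finset, Finset.card_image_of_injOn]
  rintro ⟨u, w⟩ he ⟨u', w'⟩ he' heq
  rw [Finset.mem_coe, hF, Finset.mem_filter, mem_edgeSet hP] at he he'
  obtain ⟨⟨hne, hE⟩, h1, h2⟩ := he
  obtain ⟨⟨hne', hE'⟩, h1', h2'⟩ := he'
  have h3' := hφo u' w' h1' h2'
  rw [← heq] at h3'
  obtain ⟨rfl, rfl⟩ := edge_unique (dotpL z) hE hE' (hφo u w h1 h2) h3' h1 h2 h1' h2'
  rfl

lemma dotp_cont (z : Fin 3 → ℝ) : Continuous (dotp z) := by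
  unfold dotp; fun_prop

lemma mem_le_tMax {P : Set (Fin 3 → ℝ)} (hk : IsCompact P) (z : Fin 3 → ℝ) {p} (hp : p ∈ P) :
    dotp z p ≤ tMax P z :=
  le_csSup (hk.image (dotp_cont z)).bddAbove ⟨p, hp, rfl⟩

lemma tMin_le_mem {P : Set (Fin 3 → ℝ)} (hk : IsCompact P) (z : Fin 3 → ℝ) {p} (hp : p ∈ P) :
    tMin P z ≤ dotp z p :=
  csInf_le (hk.image (dotp_cont z)).bddBelow ⟨p, hp, rfl⟩

lemma exists_tMax {P : Set (Fin 3 → ℝ)} (hk : IsCompact P) (hn : P.Nonempty) (z : Fin 3 → ℝ) :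
    ∃ p ∈ P, dotp z p = tMax P z :=
  (hk.image (dotp_cont z)).sSup_mem (hn.image _)

lemma exists_tMin {P : Set (Fin 3 → ℝ)} (hk : IsCompact P) (hn : P.Nonempty) (z : Fin 3 → ℝ) :
    ∃ p ∈ P, dotp z p = tMin P z :=
  (hk.image (dotp_cont z)).sInf_mem (hn.image _)

lemma integral_ind {a b c d : ℝ} (h1 : a ≤ c) (h2 : d ≤ b) (hab : a ≤ b) :
    (∫ t in a..b, (if c < t ∧ t < d then (1 : ℝ) else 0)) = max 0 (d - c) := by
  have : (fun t : ℝ => if c < t ∧ t < d then (1 : ℝ) else 0) = (Set.Ioo c d).indicator 1 := by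
    ext t; simp [Set.indicator, Set.mem_Ioo]
  rw [this, intervalIntegral.integral_of_le hab, MeasureTheory.integral_indicator_one measurableSet_Ioo]
  rw [MeasureTheory.measureReal_restrict_apply measurableSet_Ioo,
    Set.inter_eq_left.2 (show Set.Ioo c d ⊆ Set.Ioc a b from fun t ht => ⟨h1.trans_lt ht.1, ht.2.le.trans h2⟩), Real.volume_real_Ioo]
  exact max_comm _ _

lemma integrable_ind {a b c d : ℝ} :
    IntervalIntegrable (fun t : ℝ => if c < t ∧ t < d then (1 : ℝ) else 0) MeasureTheory.volume a b := by
  have : (fun t : ℝ => if c < t ∧ t < d then (1 : ℝ) else 0) = (Set.Ioo c d).indicator 1 := by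
    ext t; simp [Set.indicator, Set.mem_Ioo]
  rw [this, intervalIntegrable_iff]
  apply MeasureTheory.IntegrableOn.indicator _ measurableSet_Ioo
  exact MeasureTheory.integrableOn_const (by simp) 

lemma integral_nVert {s : Finset (Fin 3 → ℝ)} {P : Set (Fin 3 → ℝ)}
    (hP : P = convexHull ℝ (s : Set (Fin 3 → ℝ))) (hn : P.Nonempty) (z : Fin 3 → ℝ) :
    (∫ t in tMin P z..tMax P z, ((nVert (P ∩ {x | dotp z x = t}) : ℝ))) =
      (1 / 2) * ∑ e ∈ edgeSet s P, |dotp z (e.2 - e.1)| := by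
  classical
  have hk : IsCompact P := by rw [hP]; exact s.finite_toSet.isCompact_convexHull (𝕜 := ℝ)
  have hle : tMin P z ≤ tMax P z := by
    obtain ⟨p, hp⟩ := hn
    exact (tMin_le_mem hk z hp).trans (mem_le_tMax hk z hp)
  have h1 : (∫ t in tMin P z..tMax P z, ((nVert (P ∩ {x | dotp z x = t}) : ℝ))) =
      ∫ t in tMin P z..tMax P z, ∑ e ∈ edgeSet s P,
        (if dotp z e.1 < t ∧ t < dotp z e.2 then (1 : ℝ) else 0) := by
    apply intervalIntegral.integral_congr_ae
    have hfin : ((s.image (dotp z) : Finset ℝ) : Set ℝ).Finite := Finset.finite_toSet _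
    have hae : ∀ᵐ t : ℝ, t ∉ ((s.image (dotp z) : Finset ℝ) : Set ℝ) :=
      MeasureTheory.compl_mem_ae_iff.2 (hfin.measure_zero _)
    filter_upwards [hae] with t ht _
    rw [nVert_section hP z t, Finset.card_filter]
    · push_cast; rfl
    · intro p hp h
      apply ht
      simp only [Finset.coe_image, Set.mem_image]
      exact ⟨p, hp, h⟩
  rw [h1, intervalIntegral.integral_finsetSum (fun e _ => integrable_ind)]
  have h2 : ∀ e ∈ edgeSet s P,
      (∫ t in tMin P z..tMax P z, (if dotp z e.1 < t ∧ t < dotp z e.2 then (1 : ℝ) else 0))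
        = (1/2) * |dotp z (e.2 - e.1)| + (1/2) * (dotp z e.2 - dotp z e.1) := by
    rintro ⟨u, w⟩ he
    rw [mem_edgeSet hP] at he
    have hu := he.2.1 (left_mem_segment ℝ u w)
    have hw := he.2.1 (right_mem_segment ℝ u w)
    rw [integral_ind (tMin_le_mem hk z hu) (mem_le_tMax hk z hw) hle]
    simp only [← dotpL_apply, map_sub]
    rcases le_total (dotpL z w - dotpL z u) 0 with h | h
    · rw [max_eq_left h, abs_of_nonpos h]; ring
    · rw [max_eq_right h, abs_of_nonneg h]; ring
  rw [Finset.sum_congr rfl h2, Finset.sum_add_distrib, ← Finset.mul_sum, ← Finset.mul_sum]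
  have h3 : ∑ e ∈ edgeSet s P, (dotp z e.2 - dotp z e.1) =
      ∑ e ∈ edgeSet s P, -(dotp z e.2 - dotp z e.1) := by
    refine Finset.sum_nbij' Prod.swap Prod.swap ?_ ?_ ?_ ?_ ?_
    · rintro ⟨u, w⟩ h
      rw [mem_edgeSet hP] at h
      rw [Prod.swap_prod_mk, mem_edgeSet hP, segment_symm]
      exact ⟨h.1.symm, h.2⟩
    · rintro ⟨u, w⟩ h
      rw [mem_edgeSet hP] at h
      rw [Prod.swap_prod_mk, mem_edgeSet hP, segment_symm]
      exact ⟨h.1.symm, h.2⟩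
    · simp
    · simp
    · simp
  rw [Finset.sum_neg_distrib] at h3
  have h4 : ∑ e ∈ edgeSet s P, (dotp z e.2 - dotp z e.1) = 0 := by linarith
  rw [h4]; ring

lemma width_pos {P : Set (Fin 3 → ℝ)} (hk : IsCompact P) (hint : (interior P).Nonempty)
    {z : Fin 3 → ℝ} (hz : z ≠ 0) : tMin P z < tMax P z := by
  obtain ⟨p, hp⟩ := hint
  have hcont : Continuous (fun ε : ℝ => p + ε • z) := by fun_prop
  have hnh : ∀ᶠ ε in nhds (0 : ℝ), p + ε • z ∈ P := by
    apply hcont.continuousAt.eventually_mem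
    simpa using mem_interior_iff_mem_nhds.1 hp
  obtain ⟨ε, hε, hε0⟩ : ∃ ε : ℝ, p + ε • z ∈ P ∧ 0 < ε :=
    ((hnh.filter_mono nhdsWithin_le_nhds).and
      (self_mem_nhdsWithin : Set.Ioi (0 : ℝ) ∈ nhdsWithin 0 (Set.Ioi 0))).exists
  have h1 := tMin_le_mem hk z (interior_subset hp)
  have h2 := mem_le_tMax hk z hε
  have h3 : dotp z (p + ε • z) = dotp z p + ε * dotp z z := by
    simp only [← dotpL_apply, map_add, map_smul, smul_eq_mul]
  have h4 : 0 < dotp z z := by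
    obtain ⟨i, hi⟩ := Function.ne_iff.1 hz
    unfold dotp
    exact Finset.sum_pos' (fun j _ => mul_self_nonneg _) ⟨i, Finset.mem_univ _, mul_self_pos.2 hi⟩
  have := mul_pos hε0 h4
  linarith

lemma edgeSet_nonempty {s : Finset (Fin 3 → ℝ)} {P : Set (Fin 3 → ℝ)}
    (hP : P = convexHull ℝ (s : Set (Fin 3 → ℝ))) (hint : (interior P).Nonempty) :
    (edgeSet s P).Nonempty := by
  classical
  have hc : Convex ℝ P := by rw [hP]; exact convex_convexHull _ _
  have hk : IsCompact P := by rw [hP]; exact s.finite_toSet.isCompact_convexHull (𝕜 := ℝ)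
  have hn : P.Nonempty := hint.mono interior_subset
  set z : Fin 3 → ℝ := fun _ => 1
  have hz : z ≠ 0 := by intro h; simpa [z] using congrFun h 0
  have hw := width_pos hk hint hz
  obtain ⟨t, ht, hts⟩ := (Set.Ioo_infinite hw).exists_notMem_finset (s.image (dotp z))
  obtain ⟨p, hp, hpe⟩ := exists_tMax hk hn z
  obtain ⟨q, hq, hqe⟩ := exists_tMin hk hn z
  have hne : (P ∩ {x | dotp z x = t}).Nonempty := by
    have := hc.isPreconnected.image (dotp z) (dotp_cont z).continuousOn
    have h2 := this.Icc_subset (Set.mem_image_of_mem _ hq) (Set.mem_image_of_mem _ hp)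
    rw [hpe, hqe] at h2
    obtain ⟨x, hx, hxt⟩ := h2 ⟨ht.1.le, ht.2.le⟩
    exact ⟨x, hx, hxt⟩
  have hcpt : IsCompact (P ∩ {x | dotp z x = t}) :=
    hk.inter_right (isClosed_eq (dotp_cont z) continuous_const)
  obtain ⟨x, hx⟩ := hcpt.extremePoints_nonempty hne
  have hno : ∀ p ∈ Set.extremePoints ℝ P, dotpL z p ≠ t := by
    intro p hp h
    apply hts
    rw [hP] at hp
    exact Finset.mem_image.2 ⟨p, extremePoints_convexHull_subset hp, h⟩
  obtain ⟨u, w, h1, h2, h3, h4⟩ := ext_section_exists hc hk (dotpL z) t hno x hx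
  refine ⟨(u, w), (mem_edgeSet hP).2 ⟨?_, h3⟩⟩
  rintro rfl
  exact absurd (h1.trans h2) (lt_irrefl _)

end PartTwo
section PartThree

lemma exists_dotp {d : ℕ} (f : (Fin d → ℝ) →ₗ[ℝ] ℝ) : ∃ y, ∀ x, f x = dotp y x := by
  classical
  refine ⟨fun i => f (Pi.single i 1), fun x => ?_⟩
  conv_lhs => rw [← Finset.univ_sum_single x]
  rw [map_sum, dotp]
  refine Finset.sum_congr rfl fun i _ => ?_
  have : (Pi.single i (x i) : Fin d → ℝ) = x i • Pi.single i 1 := by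
    ext j; by_cases h : j = i
    · subst h; simp
    · simp [h]
  rw [this, map_smul, smul_eq_mul, mul_comm]

lemma dotp_add {d : ℕ} (z x y : Fin d → ℝ) : dotp z (x + y) = dotp z x + dotp z y :=
  map_add (dotpL z) x y
lemma dotp_sub {d : ℕ} (z x y : Fin d → ℝ) : dotp z (x - y) = dotp z x - dotp z y :=
  map_sub (dotpL z) x y
lemma dotp_neg {d : ℕ} (z x : Fin d → ℝ) : dotp z (-x) = - dotp z x :=
  map_neg (dotpL z) x
lemma dotp_smul {d : ℕ} (z : Fin d → ℝ) (c : ℝ) (x : Fin d → ℝ) : dotp z (c • x) = c * dotp z x :=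
  map_smul (dotpL z) c x
lemma dotp_sum {d : ℕ} {ι : Type*} (z : Fin d → ℝ) (I : Finset ι) (g : ι → Fin d → ℝ) :
    dotp z (∑ i ∈ I, g i) = ∑ i ∈ I, dotp z (g i) :=
  map_sum (dotpL z) g I
lemma dotp_comm {d : ℕ} (x y : Fin d → ℝ) : dotp x y = dotp y x :=
  Finset.sum_congr rfl fun _ _ => mul_comm _ _
lemma dotp_self_pos {d : ℕ} {z : Fin d → ℝ} (hz : z ≠ 0) : 0 < dotp z z := by
  obtain ⟨i, hi⟩ := Function.ne_iff.1 hz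
  unfold dotp
  exact Finset.sum_pos' (fun j _ => mul_self_nonneg _) ⟨i, Finset.mem_univ _, mul_self_pos.2 hi⟩

/-- zonotope -/
def Zono (x : Fin 3 → ℝ) (V : Finset (Fin 3 → ℝ)) : Set (Fin 3 → ℝ) :=
  {x} + ∑ v ∈ V, segment ℝ 0 v

lemma mem_zono {x p : Fin 3 → ℝ} {V : Finset (Fin 3 → ℝ)} : p ∈ Zono x V ↔
    ∃ a : (Fin 3 → ℝ) → ℝ, (∀ v ∈ V, 0 ≤ a v ∧ a v ≤ 1) ∧ p = x + ∑ v ∈ V, a v • v := by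
  classical
  rw [Zono, Set.singleton_add, Set.mem_image]
  constructor
  · rintro ⟨q, hq, rfl⟩
    obtain ⟨g, hg, rfl⟩ := (Set.mem_finsetSum _ _ _).1 hq
    have : ∀ v, ∃ r : ℝ, v ∈ V → (0 ≤ r ∧ r ≤ 1 ∧ g v = r • v) := by
      intro v
      by_cases hv : v ∈ V
      · obtain ⟨r, h0, h1, h⟩ := seg_param.1 (hg hv)
        exact ⟨r, fun _ => ⟨h0, h1, by simpa using h⟩⟩
      · exact ⟨0, fun h => absurd h hv⟩
    choose a ha using this
    exact ⟨a, fun v hv => ⟨(ha v hv).1, (ha v hv).2.1⟩, by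
      rw [Finset.sum_congr rfl fun v hv => (ha v hv).2.2]⟩
  · rintro ⟨a, ha, rfl⟩
    refine ⟨_, ?_, rfl⟩
    refine (Set.mem_finsetSum _ _ _).2 ⟨fun v => a v • v, fun {v} hv => ?_, rfl⟩
    exact seg_param.2 ⟨a v, (ha v hv).1, (ha v hv).2, by simp⟩

lemma zono_greatest (x z : Fin 3 → ℝ) (V : Finset (Fin 3 → ℝ)) :
    IsGreatest (dotp z '' Zono x V) (dotp z x + ∑ v ∈ V, max 0 (dotp z v)) := by
  classical
  constructor
  · refine ⟨_, mem_zono.2 ⟨fun v => if 0 < dotp z v then 1 else 0, fun v _ => ?_, rfl⟩, ?_⟩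
    · dsimp only; split_ifs <;> norm_num
    · rw [dotp_add, dotp_sum]
      congr 1
      refine Finset.sum_congr rfl fun v _ => ?_
      rw [dotp_smul]
      dsimp only
      split_ifs with h
      · rw [max_eq_right h.le, one_mul]
      · rw [max_eq_left (not_lt.1 h), zero_mul]
  · rintro _ ⟨p, hp, rfl⟩
    obtain ⟨a, ha, rfl⟩ := mem_zono.1 hp
    rw [dotp_add, dotp_sum]
    gcongr with v hv
    rw [dotp_smul]
    obtain ⟨h0, h1⟩ := ha v hv
    rcases le_total (dotp z v) 0 with h | h
    · exact (mul_nonpos_of_nonneg_of_nonpos h0 h).trans (le_max_left _ _)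
    · exact (mul_le_of_le_one_left h h1).trans (le_max_right _ _)

lemma zono_least (x z : Fin 3 → ℝ) (V : Finset (Fin 3 → ℝ)) :
    IsLeast (dotp z '' Zono x V) (dotp z x + ∑ v ∈ V, min 0 (dotp z v)) := by
  classical
  constructor
  · refine ⟨_, mem_zono.2 ⟨fun v => if dotp z v < 0 then 1 else 0, fun v _ => ?_, rfl⟩, ?_⟩
    · dsimp only; split_ifs <;> norm_num
    · rw [dotp_add, dotp_sum]
      congr 1
      refine Finset.sum_congr rfl fun v _ => ?_
      rw [dotp_smul]
      dsimp only
      split_ifs with h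
      · rw [min_eq_right h.le, one_mul]
      · rw [min_eq_left (not_lt.1 h), zero_mul]
  · rintro _ ⟨p, hp, rfl⟩
    obtain ⟨a, ha, rfl⟩ := mem_zono.1 hp
    rw [dotp_add, dotp_sum]
    gcongr with v hv
    rw [dotp_smul]
    obtain ⟨h0, h1⟩ := ha v hv
    rcases le_total (dotp z v) 0 with h | h
    · exact (min_le_right _ _).trans (by nlinarith)
    · exact (min_le_left _ _).trans (mul_nonneg h0 h)

lemma zono_width (x z : Fin 3 → ℝ) (V : Finset (Fin 3 → ℝ)) :
    tMax (Zono x V) z - tMin (Zono x V) z = ∑ v ∈ V, |dotp z v| := by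
  rw [tMax, tMin, (zono_greatest x z V).csSup_eq, (zono_least x z V).csInf_eq,
    add_sub_add_left_eq_sub, ← Finset.sum_sub_distrib]
  refine Finset.sum_congr rfl fun v _ => ?_
  rcases le_total (dotp z v) 0 with h | h
  · rw [max_eq_left h, min_eq_right h, abs_of_nonpos h]; ring
  · rw [max_eq_right h, min_eq_left h, abs_of_nonneg h]; ring

lemma zono_convex (x : Fin 3 → ℝ) (V : Finset (Fin 3 → ℝ)) : Convex ℝ (Zono x V) := by
  intro p hp q hq α β hα hβ hαβ
  obtain ⟨a, ha, rfl⟩ := mem_zono.1 hp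
  obtain ⟨b, hb, rfl⟩ := mem_zono.1 hq
  refine mem_zono.2 ⟨fun v => α * a v + β * b v, fun v hv => ?_, ?_⟩
  · obtain ⟨h0, h1⟩ := ha v hv
    obtain ⟨h0', h1'⟩ := hb v hv
    constructor
    · positivity
    · nlinarith
  · simp only [add_smul, mul_smul, Finset.sum_add_distrib, ← Finset.smul_sum]
    have : x = α • x + β • x := by rw [← add_smul, hαβ, one_smul]
    conv_rhs => rw [this]
    simp only [smul_add]
    abel

lemma zono_compact (x : Fin 3 → ℝ) (V : Finset (Fin 3 → ℝ)) : IsCompact (Zono x V) := by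
  unfold Zono
  have : ∀ W : Finset (Fin 3 → ℝ), IsCompact (∑ v ∈ W, segment ℝ (0 : Fin 3 → ℝ) v) := by
    classical
    intro W
    induction W using Finset.induction_on with
    | empty => simp
    | insert v W hv ih =>
      rw [Finset.sum_insert hv]
      refine IsCompact.add ?_ ih
      rw [segment_eq_image']
      exact isCompact_Icc.image (by fun_prop)
  exact isCompact_singleton.add (this V)

lemma eq_zono_of_width {P : Set (Fin 3 → ℝ)} (hc : Convex ℝ P) (hk : IsCompact P)
    (hn : P.Nonempty) {c : Fin 3 → ℝ} (hsym : (fun y => (2 : ℝ) • c - y) '' P = P)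
    (V : Finset (Fin 3 → ℝ)) (hw : ∀ z, tMax P z - tMin P z = ∑ v ∈ V, |dotp z v|) :
    P = Zono (c - (1/2 : ℝ) • ∑ v ∈ V, v) V := by
  have hsym' : ∀ p ∈ P, (2 : ℝ) • c - p ∈ P := fun p hp =>
    hsym.subset ⟨p, hp, rfl⟩
  have hM : ∀ z, dotp z (c - (1/2 : ℝ) • ∑ v ∈ V, v) + ∑ v ∈ V, max 0 (dotp z v) =
      dotp z c + (1/2) * ∑ v ∈ V, |dotp z v| := by
    intro z
    rw [dotp_sub, dotp_smul, dotp_sum, Finset.mul_sum, Finset.mul_sum, sub_add_eq_add_sub,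
      add_sub_assoc, ← Finset.sum_sub_distrib]
    congr 1
    refine Finset.sum_congr rfl fun v _ => ?_
    rcases le_total (dotp z v) 0 with h | h
    · rw [max_eq_left h, abs_of_nonpos h]; ring
    · rw [max_eq_right h, abs_of_nonneg h]; ring
  have hmax : ∀ z, tMax P z = dotp z c + (1/2) * ∑ v ∈ V, |dotp z v| := by
    intro z
    obtain ⟨p, hp, hpe⟩ := exists_tMax hk hn z
    obtain ⟨q, hq, hqe⟩ := exists_tMin hk hn z
    have h1 := tMin_le_mem hk z (hsym' p hp)
    have h2 := mem_le_tMax hk z (hsym' q hq)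
    rw [dotp_sub, dotp_smul] at h1 h2
    have := hw z
    linarith
  apply Set.Subset.antisymm
  · intro p hp
    by_contra hq
    obtain ⟨f, s, hf1, hf2⟩ := geometric_hahn_banach_closed_point (zono_convex _ _)
      (zono_compact _ _).isClosed hq
    obtain ⟨z, hz⟩ := exists_dotp (f : (Fin 3 → ℝ) →ₗ[ℝ] ℝ)
    obtain ⟨q, hq, hqe⟩ := (zono_greatest (c - (1/2 : ℝ) • ∑ v ∈ V, v) z V).1
    rw [hM z] at hqe
    have h1 := hf1 q hq
    have h2 := mem_le_tMax hk z hp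
    rw [hmax z, ← hqe, ← hz, ← hz] at h2
    simp only [ContinuousLinearMap.coe_coe] at h2
    linarith
  · intro q hq
    by_contra hp
    obtain ⟨f, s, hf1, hf2⟩ := geometric_hahn_banach_closed_point hc hk.isClosed hp
    obtain ⟨z, hz⟩ := exists_dotp (f : (Fin 3 → ℝ) →ₗ[ℝ] ℝ)
    obtain ⟨p, hp, hpe⟩ := exists_tMax hk hn z
    have h2 := (zono_greatest (c - (1/2 : ℝ) • ∑ v ∈ V, v) z V).2 ⟨q, hq, rfl⟩
    rw [hM z, ← hmax, ← hpe, ← hz, ← hz] at h2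
    have h1 := hf1 p hp
    simp only [ContinuousLinearMap.coe_coe] at h2
    linarith

/-- pairwise independence -/
def PI (V : Finset (Fin 3 → ℝ)) : Prop :=
  (∀ v ∈ V, v ≠ 0) ∧ (∀ u ∈ V, ∀ v ∈ V, u ≠ v → ∀ c : ℝ, v ≠ c • u)

lemma exists_grouping {ι : Type*} (I : Finset ι) (g : ι → Fin 3 → ℝ) :
    ∃ V, PI V ∧ ∀ z, ∑ i ∈ I, |dotp z (g i)| = ∑ v ∈ V, |dotp z v| := by
  classical
  induction I using Finset.induction_on with
  | empty => exact ⟨∅, ⟨by simp, by simp⟩, by simp⟩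
  | insert i I hi ih =>
    obtain ⟨V, ⟨h1, h2⟩, h3⟩ := ih
    by_cases h0 : g i = 0
    · refine ⟨V, ⟨h1, h2⟩, fun z => ?_⟩
      rw [Finset.sum_insert hi, h3, h0, ← dotpL_apply, map_zero]; simp
    by_cases hp : ∃ v ∈ V, ∃ c : ℝ, g i = c • v
    · obtain ⟨v, hv, c, hc⟩ := hp
      have hk : 0 < 1 + |c| := by positivity
      have hnot : (1 + |c|) • v ∉ V.erase v := by
        intro h
        rw [Finset.mem_erase] at h
        exact h2 v hv _ h.2 h.1.symm _ rfl
      refine ⟨insert ((1 + |c|) • v) (V.erase v), ⟨?_, ?_⟩, fun z => ?_⟩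
      · intro w hw
        rw [Finset.mem_insert] at hw
        rcases hw with rfl | hw
        · exact smul_ne_zero hk.ne' (h1 v hv)
        · exact h1 w (Finset.mem_of_mem_erase hw)
      · intro u hu w hw huw r
        rw [Finset.mem_insert, Finset.mem_erase] at hu hw
        rcases hu with rfl | hu <;> rcases hw with rfl | hw
        · exact absurd rfl huw
        · rw [smul_smul]
          exact h2 v hv w hw.2 hw.1.symm _
        · intro h
          refine h2 u hu.2 v hv hu.1 ((1 + |c|)⁻¹ * r) ?_
          rw [mul_smul, ← h, smul_smul, inv_mul_cancel₀ hk.ne', one_smul]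
        · exact h2 u hu.2 w hw.2 huw r
      · rw [Finset.sum_insert hi, h3, Finset.sum_insert hnot, ← Finset.add_sum_erase V _ hv, hc,
          dotp_smul, dotp_smul, abs_mul, abs_mul, abs_of_pos hk]
        ring
    · push Not at hp
      have hnot : g i ∉ V := fun h => hp _ h 1 (by simp)
      refine ⟨insert (g i) V, ⟨?_, ?_⟩, fun z => ?_⟩
      · intro w hw
        rw [Finset.mem_insert] at hw
        rcases hw with rfl | hw
        · exact h0
        · exact h1 w hw
      · intro u hu w hw huw r
        rw [Finset.mem_insert] at hu hw
        rcases hu with rfl | hu <;> rcases hw with rfl | hw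
        · exact absurd rfl huw
        · intro h
          have hr : r ≠ 0 := by rintro rfl; exact h1 w hw (by simpa using h)
          refine hp w hw r⁻¹ ?_
          rw [h, smul_smul, inv_mul_cancel₀ hr, one_smul]
        · exact hp u hu r
        · exact h2 u hu w hw huw r
      · rw [Finset.sum_insert hi, h3, Finset.sum_insert hnot]

lemma exists_generic {V : Finset (Fin 3 → ℝ)} (hV : PI V) {v₀ : Fin 3 → ℝ} (hv₀ : v₀ ∈ V) :
    ∃ y, dotp y v₀ = 0 ∧ ∀ v ∈ V, v ≠ v₀ → dotp y v ≠ 0 := by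
  classical
  let Q := (Fin 3 → ℝ) ⧸ Submodule.span ℝ {v₀}
  obtain ⟨f, hf⟩ := Module.exists_dual_forall_apply_ne_zero (K := ℝ) (M := Q)
    (fun v : {v // v ∈ V.erase v₀} => Submodule.Quotient.mk v.1) (by
      rintro ⟨v, hv⟩ h
      rw [Submodule.Quotient.mk_eq_zero, Submodule.mem_span_singleton] at h
      obtain ⟨c, hc⟩ := h
      rw [Finset.mem_erase] at hv
      exact hV.2 v₀ hv₀ v hv.2 hv.1.symm c hc.symm)
  obtain ⟨y, hy⟩ := exists_dotp (f ∘ₗ Submodule.mkQ (Submodule.span ℝ {v₀}))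
  refine ⟨y, ?_, fun v hv hne => ?_⟩
  · rw [← hy, LinearMap.comp_apply, Submodule.mkQ_apply,
      (Submodule.Quotient.mk_eq_zero _).2 (Submodule.mem_span_singleton_self v₀), map_zero]
  · rw [← hy]
    exact hf ⟨v, Finset.mem_erase.2 ⟨hne, hv⟩⟩

lemma abs_indep {V : Finset (Fin 3 → ℝ)} (hV : PI V) (k : (Fin 3 → ℝ) → ℝ)
    (h : ∀ z, ∑ v ∈ V, k v * |dotp z v| = 0) : ∀ v ∈ V, k v = 0 := by
  classical
  intro v₀ hv₀
  obtain ⟨y, hy0, hy⟩ := exists_generic hV hv₀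
  have hev : ∀ᶠ ε in nhdsWithin (0 : ℝ) (Set.Ioi 0), ∀ v ∈ V.erase v₀,
      |ε * dotp v₀ v| ≤ |dotp y v| := by
    rw [Filter.eventually_all_finset]
    intro v hv
    rw [Finset.mem_erase] at hv
    have hc : Continuous (fun ε : ℝ => |ε * dotp v₀ v|) := by fun_prop
    have := hc.continuousAt (x := 0) |>.eventually_lt_const (show |0 * dotp v₀ v| < |dotp y v| by
      simpa using hy v hv.2 hv.1)
    exact (this.filter_mono nhdsWithin_le_nhds).mono fun _ h => h.le
  obtain ⟨ε, hε, hε0⟩ := (hev.and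
      (self_mem_nhdsWithin : Set.Ioi (0 : ℝ) ∈ nhdsWithin 0 (Set.Ioi 0))).exists
  have hε0 : 0 < ε := hε0
  have e1 := h (y + ε • v₀)
  have e2 := h (y - ε • v₀)
  have e3 := h y
  have hl : ∀ v, dotp (y + ε • v₀) v = dotp y v + ε * dotp v₀ v := fun v => by
    rw [dotp_comm, dotp_add, dotp_smul, dotp_comm v y, dotp_comm v v₀]
  have hl' : ∀ v, dotp (y - ε • v₀) v = dotp y v - ε * dotp v₀ v := fun v => by
    rw [dotp_comm, dotp_sub, dotp_smul, dotp_comm v y, dotp_comm v v₀]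
  have e4 : ∑ v ∈ V, k v * (|dotp y v + ε * dotp v₀ v| + |dotp y v - ε * dotp v₀ v|
      - 2 * |dotp y v|) = 0 := by
    simp only [hl, hl'] at e1 e2
    have : ∀ v, k v * (|dotp y v + ε * dotp v₀ v| + |dotp y v - ε * dotp v₀ v|
      - 2 * |dotp y v|) = k v * |dotp y v + ε * dotp v₀ v| + k v * |dotp y v - ε * dotp v₀ v|
      - 2 * (k v * |dotp y v|) := fun v => by ring
    simp only [this]
    rw [Finset.sum_sub_distrib, Finset.sum_add_distrib, ← Finset.mul_sum, e1, e2, e3]; simp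
  rw [← Finset.add_sum_erase V _ hv₀, Finset.sum_eq_zero, hy0] at e4
  · have hpos : 0 < ε * dotp v₀ v₀ := mul_pos hε0 (dotp_self_pos (hV.1 v₀ hv₀))
    simp only [zero_add, zero_sub, abs_neg, abs_zero, abs_of_pos hpos] at e4
    have : k v₀ * (2 * (ε * dotp v₀ v₀)) = 0 := by linarith
    rcases mul_eq_zero.1 this with h | h
    · exact h
    · linarith
  · intro v hv
    have h5 := hε v hv
    have : |dotp y v + ε * dotp v₀ v| + |dotp y v - ε * dotp v₀ v| = 2 * |dotp y v| := by
      generalize dotp y v = a at *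
      generalize ε * dotp v₀ v = b at *
      rw [abs_le] at h5
      rcases le_total a 0 with h | h
      · rw [abs_of_nonpos h] at h5 ⊢
        rw [abs_of_nonpos (by linarith), abs_of_nonpos (by linarith)]; ring
      · rw [abs_of_nonneg h] at h5 ⊢
        rw [abs_of_nonneg (by linarith), abs_of_nonneg (by linarith)]; ring
    rw [this]; simp

end PartThree
section PartFour

lemma count_line (R : Finset ℝ) (hR : R.Nonempty) :
    {A : Finset ℝ | ∃ a b : ℝ, (∀ r ∈ R, a + b * r ≠ 0) ∧
      A = R.filter (fun r => 0 < a + b * r)}.ncard = 2 * R.card := by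
  classical
  set ψ : ℝ × Bool → Finset ℝ := fun q =>
    if q.2 then R.filter (fun r => q.1 ≤ r) else R.filter (fun r => r < q.1) with hψ
  have hgap : ∀ r₀ : ℝ, ∃ c, c < r₀ ∧ ∀ r ∈ R, r < r₀ → r < c := by
    intro r₀
    have : ∀ᶠ c in nhdsWithin r₀ (Set.Iio r₀), ∀ r ∈ R, r < r₀ → r < c := by
      rw [Filter.eventually_all_finset]
      intro r _
      by_cases h : r < r₀
      · have := (lt_mem_nhds h).filter_mono (nhdsWithin_le_nhds (s := Set.Iio r₀))
        exact this.mono fun c hc _ => hc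
      · exact Filter.Eventually.of_forall fun c hc => absurd hc h
    obtain ⟨c, h1, h2⟩ := (this.and (self_mem_nhdsWithin :
      Set.Iio r₀ ∈ nhdsWithin r₀ (Set.Iio r₀))).exists
    exact ⟨c, h2, h1⟩
  have hset : {A : Finset ℝ | ∃ a b : ℝ, (∀ r ∈ R, a + b * r ≠ 0) ∧
      A = R.filter (fun r => 0 < a + b * r)} =
      (((R ×ˢ (Finset.univ : Finset Bool)).image ψ : Finset (Finset ℝ)) : Set (Finset ℝ)) := by
    ext A
    simp only [Finset.coe_image, Set.mem_image, Finset.mem_coe, Finset.mem_product,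
      Finset.mem_univ, and_true]
    constructor
    · rintro ⟨a, b, hab, rfl⟩
      -- general: an upper set or lower set
      have hup : ∀ p : ℝ → Prop, (∀ r ∈ R, ∀ r' ∈ R, p r → r ≤ r' → p r') →
          ∃ q : ℝ × Bool, q.1 ∈ R ∧ ψ q = R.filter p := by
        intro p hp
        by_cases hne : (R.filter p).Nonempty
        · refine ⟨((R.filter p).min' hne, true), ?_, ?_⟩
          · exact (Finset.mem_filter.1 ((R.filter p).min'_mem hne)).1
          · simp only [hψ, if_true]
            ext r
            simp only [Finset.mem_filter]
            constructor
            · rintro ⟨h1, h2⟩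
              have h3 := Finset.mem_filter.1 ((R.filter p).min'_mem hne)
              exact ⟨h1, hp _ h3.1 _ h1 h3.2 h2⟩
            · rintro ⟨h1, h2⟩
              exact ⟨h1, Finset.min'_le _ _ (Finset.mem_filter.2 ⟨h1, h2⟩)⟩
        · refine ⟨(R.min' hR, false), R.min'_mem hR, ?_⟩
          rw [Finset.not_nonempty_iff_eq_empty] at hne
          rw [hne]
          simp only [hψ]
          ext r
          simp only [Bool.false_eq_true, if_false, Finset.mem_filter, Finset.notMem_empty, iff_false,
            not_and, not_lt]
          exact fun h => Finset.min'_le _ _ h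
      have hlow : ∀ p : ℝ → Prop, (∀ r ∈ R, ∀ r' ∈ R, p r → r' ≤ r → p r') →
          ∃ q : ℝ × Bool, q.1 ∈ R ∧ ψ q = R.filter p := by
        intro p hp
        by_cases hne : (R.filter (fun r => ¬ p r)).Nonempty
        · refine ⟨((R.filter (fun r => ¬ p r)).min' hne, false), ?_, ?_⟩
          · exact (Finset.mem_filter.1 ((R.filter (fun r => ¬ p r)).min'_mem hne)).1
          · simp only [hψ, Bool.false_eq_true, if_false]
            ext r
            simp only [Finset.mem_filter]
            have h3 := Finset.mem_filter.1 ((R.filter (fun r => ¬ p r)).min'_mem hne)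
            constructor
            · rintro ⟨h1, h2⟩
              refine ⟨h1, ?_⟩
              by_contra hcon
              exact absurd (Finset.min'_le (R.filter (fun r => ¬ p r)) r
                (Finset.mem_filter.2 ⟨h1, hcon⟩)) (not_le.2 h2)
            · rintro ⟨h1, h2⟩
              refine ⟨h1, ?_⟩
              by_contra hcon
              exact h3.2 (hp r h1 _ h3.1 h2 (not_lt.1 hcon))
        · refine ⟨(R.min' hR, true), R.min'_mem hR, ?_⟩
          rw [Finset.not_nonempty_iff_eq_empty, Finset.filter_eq_empty_iff] at hne
          simp only [hψ, if_true]
          ext r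
          simp only [Finset.mem_filter]
          constructor
          · rintro ⟨h1, h2⟩
            exact ⟨h1, not_not.1 (hne h1)⟩
          · rintro ⟨h1, h2⟩
            exact ⟨h1, Finset.min'_le _ _ h1⟩
      rcases le_total 0 b with hb | hb
      · exact hup _ fun r _ r' _ h1 h2 => by nlinarith
      · exact hlow _ fun r _ r' _ h1 h2 => by nlinarith
    · rintro ⟨⟨r₀, i⟩, hr₀, rfl⟩
      obtain ⟨c, hc1, hc2⟩ := hgap r₀
      cases i
      · refine ⟨c, -1, ?_, ?_⟩
        · intro r hr h
          have : r = c := by linarith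
          have := hc2 r hr (by linarith)
          linarith
        · simp only [hψ, Bool.false_eq_true, if_false]
          apply Finset.filter_congr
          intro r hr
          constructor
          · intro h; linarith [hc2 r hr h]
          · intro h; linarith
      · refine ⟨-c, 1, ?_, ?_⟩
        · intro r hr h
          have : r = c := by linarith
          have := hc2 r hr (by linarith)
          linarith
        · simp only [hψ, if_true]
          apply Finset.filter_congr
          intro r hr
          constructor
          · intro h; linarith
          · intro h
            by_contra hcon
            linarith [hc2 r hr (not_le.1 hcon)]
  rw [hset, Set.ncard_coe_finset, Finset.card_image_of_injOn, Finset.card_product]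
  · simp [mul_comm]
  · rintro ⟨r, i⟩ h ⟨r', i'⟩ h' heq
    simp only [Finset.coe_product, Set.mem_prod, Finset.mem_coe] at h h'
    have hm := R.max'_mem hR
    have mem := fun x => Finset.ext_iff.1 heq x
    cases i <;> cases i' <;> simp only [hψ, Bool.false_eq_true, if_false, if_true,
      Finset.mem_filter] at mem
    · have h1 := mem r
      have h2 := mem r'
      simp only [h.1, h'.1, true_and, lt_irrefl, false_iff, iff_false, not_lt] at h1 h2
      rw [le_antisymm h2 h1]
    · have h1 := mem (R.max' hR)
      have h2 := (h1.2 ⟨hm, R.le_max' _ h'.1⟩).2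
      exact absurd (R.le_max' _ h.1) (not_le.2 h2)
    · have h1 := mem (R.max' hR)
      have h2 := (h1.1 ⟨hm, R.le_max' _ h.1⟩).2
      exact absurd (R.le_max' _ h'.1) (not_le.2 h2)
    · have h1 := mem r
      have h2 := mem r'
      simp only [h.1, h'.1, true_and, le_refl, true_iff, iff_true] at h1 h2
      rw [le_antisymm h2 h1]

/-- generic functionals vanishing on `v₀` -/
def Gen (V : Finset (Fin 3 → ℝ)) (v₀ y : Fin 3 → ℝ) : Prop :=
  dotp y v₀ = 0 ∧ ∀ v ∈ V, v ≠ v₀ → dotp y v ≠ 0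

lemma frame {v e : Fin 3 → ℝ} (hv : v ≠ 0) (he : e ≠ 0) (h : dotp e v = 0) :
    ∃ e₂, dotp e₂ v = 0 ∧ (∀ y, dotp y v = 0 → ∃ a b : ℝ, y = a • e + b • e₂) ∧
      (∀ x, dotp e x = 0 → dotp e₂ x = 0 → ∃ c : ℝ, x = c • v) := by
  have hv' := dotp_self_pos hv
  have he' := dotp_self_pos he
  set c : Fin 3 → ℝ := ![v 1 * e 2 - v 2 * e 1, v 2 * e 0 - v 0 * e 2, v 0 * e 1 - v 1 * e 0] with hc
  have key : ∀ y : Fin 3 → ℝ, (dotp v v * dotp e e) • y =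
      (dotp e e * dotp y v) • v + (dotp v v * dotp y e) • e + (dotp y c) • c := by
    intro y
    simp only [dotp, Fin.sum_univ_three] at h
    ext i
    fin_cases i <;> simp [dotp, Fin.sum_univ_three, hc]
    · linear_combination ((e 0 * v 0 + e 1 * v 1 + e 2 * v 2) * y 0
        - (y 0 * e 0 + y 1 * e 1 + y 2 * e 2) * v 0 - (y 0 * v 0 + y 1 * v 1 + y 2 * v 2) * e 0) * h
    · linear_combination ((e 0 * v 0 + e 1 * v 1 + e 2 * v 2) * y 1
        - (y 0 * e 0 + y 1 * e 1 + y 2 * e 2) * v 1 - (y 0 * v 0 + y 1 * v 1 + y 2 * v 2) * e 1) * h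
    · linear_combination ((e 0 * v 0 + e 1 * v 1 + e 2 * v 2) * y 2
        - (y 0 * e 0 + y 1 * e 1 + y 2 * e 2) * v 2 - (y 0 * v 0 + y 1 * v 1 + y 2 * v 2) * e 2) * h
  have hne : dotp v v * dotp e e ≠ 0 := (mul_pos hv' he').ne'
  refine ⟨c, ?_, fun y hy => ?_, fun x h1 h2 => ?_⟩
  · simp [dotp, Fin.sum_univ_three, hc]; ring
  · refine ⟨(dotp v v * dotp e e)⁻¹ * (dotp v v * dotp y e), (dotp v v * dotp e e)⁻¹ * dotp y c, ?_⟩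
    have := key y
    rw [hy, mul_zero, zero_smul, zero_add] at this
    rw [mul_smul, mul_smul _ (dotp y c), ← smul_add, ← this, smul_smul, inv_mul_cancel₀ hne, one_smul]
  · refine ⟨(dotp v v * dotp e e)⁻¹ * (dotp e e * dotp x v), ?_⟩
    have := key x
    rw [dotp_comm x e, dotp_comm x c, h1, h2, mul_zero, zero_smul, zero_smul, add_zero,
      add_zero] at this
    rw [mul_smul, ← this, smul_smul, inv_mul_cancel₀ hne, one_smul]

end PartFour
section PartFive

lemma finrank_pair {V : Finset (Fin 3 → ℝ)} (hV : PI V) {v₀ v : Fin 3 → ℝ} (hv₀ : v₀ ∈ V)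
    (hv : v ∈ V) (hne : v ≠ v₀) :
    Module.finrank ℝ (Submodule.span ℝ ({v₀, v} : Set (Fin 3 → ℝ))) = 2 := by
  have hli : LinearIndependent ℝ ![v₀, v] := by
    rw [LinearIndependent.pair_iff' (hV.1 v₀ hv₀)]
    intro a h
    exact hV.2 v₀ hv₀ v hv hne.symm a h.symm
  have := finrank_span_eq_card hli
  rw [Matrix.range_cons_cons_empty] at this
  simpa using this

open Classical in
/-- the plane through `v₀` and `v` -/
def planeF (V : Finset (Fin 3 → ℝ)) (v₀ v : Fin 3 → ℝ) : Finset (Fin 3 → ℝ) :=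
  V.filter (fun w => w ∈ Submodule.span ℝ ({v₀, v} : Set (Fin 3 → ℝ)))

lemma span_planeF {V : Finset (Fin 3 → ℝ)} {v₀ v : Fin 3 → ℝ} (hv₀ : v₀ ∈ V)
    (hv : v ∈ V) : Submodule.span ℝ (planeF V v₀ v : Set (Fin 3 → ℝ)) =
      Submodule.span ℝ ({v₀, v} : Set (Fin 3 → ℝ)) := by
  classical
  apply le_antisymm
  · rw [Submodule.span_le]
    intro w hw
    exact (Finset.mem_filter.1 hw).2
  · apply Submodule.span_mono
    rintro w (rfl | rfl)
    · exact Finset.mem_filter.2 ⟨hv₀, Submodule.subset_span (by simp)⟩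
    · exact Finset.mem_filter.2 ⟨hv, Submodule.subset_span (by simp)⟩

lemma hedges_eq {V : Finset (Fin 3 → ℝ)} (hV : PI V) {v₀ : Fin 3 → ℝ} (hv₀ : v₀ ∈ V) :
    {W : Finset (Fin 3 → ℝ) | IsHEdge V W ∧ v₀ ∈ W} = planeF V v₀ '' {v | v ∈ V ∧ v ≠ v₀} := by
  classical
  ext W
  constructor
  · rintro ⟨⟨hWV, hr, hmax⟩, h0⟩
    have : ∃ v ∈ W, v ≠ v₀ := by
      by_contra hcon
      push Not at hcon
      have h1 : (W : Set (Fin 3 → ℝ)) ⊆ {v₀} := fun v hv => hcon v hv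
      have h2 : Submodule.span ℝ (W : Set (Fin 3 → ℝ)) ≤ Submodule.span ℝ {v₀} :=
        Submodule.span_mono h1
      have h3 := Submodule.finrank_mono h2
      have h4 := finrank_span_le_card (R := ℝ) ({v₀} : Set (Fin 3 → ℝ))
      simp at h4
      omega
    obtain ⟨v, hv, hne⟩ := this
    refine ⟨v, ⟨hWV hv, hne⟩, ?_⟩
    have hsp : Submodule.span ℝ ({v₀, v} : Set (Fin 3 → ℝ)) =
        Submodule.span ℝ (W : Set (Fin 3 → ℝ)) := by
      apply Submodule.eq_of_le_of_finrank_eq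
      · apply Submodule.span_mono
        rintro w (rfl | rfl) <;> assumption
      · rw [hr, finrank_pair hV hv₀ (hWV hv) hne]
    ext w
    rw [planeF, Finset.mem_filter, hsp]
    constructor
    · rintro ⟨h1, h2⟩
      by_contra h3
      have h4 := hmax w h1 h3
      rw [Submodule.span_insert_eq_span h2, hr] at h4
      omega
    · intro h
      exact ⟨hWV h, Submodule.subset_span h⟩
  · rintro ⟨v, ⟨hv, hne⟩, rfl⟩
    refine ⟨⟨Finset.filter_subset _ _, ?_, ?_⟩, ?_⟩
    · rw [span_planeF hv₀ hv, finrank_pair hV hv₀ hv hne]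
    · intro w hw hnot
      have h1 : w ∉ Submodule.span ℝ (planeF V v₀ v : Set (Fin 3 → ℝ)) := by
        rw [span_planeF hv₀ hv]
        intro h
        exact hnot (Finset.mem_filter.2 ⟨hw, h⟩)
      have h2 : Submodule.span ℝ (planeF V v₀ v : Set (Fin 3 → ℝ)) <
          Submodule.span ℝ (insert w (planeF V v₀ v : Set (Fin 3 → ℝ))) := by
        apply lt_of_le_of_ne (Submodule.span_mono (Set.subset_insert _ _))
        intro h
        apply h1
        rw [h]
        exact Submodule.subset_span (Set.mem_insert _ _)
      have h3 := Submodule.finrank_lt_finrank_of_lt h2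
      rw [span_planeF hv₀ hv, finrank_pair hV hv₀ hv hne] at h3
      have h4 := Submodule.finrank_le
        (Submodule.span ℝ (insert w (planeF V v₀ v : Set (Fin 3 → ℝ))))
      rw [Module.finrank_fin_fun] at h4
      omega
    · exact Finset.mem_filter.2 ⟨hv₀, Submodule.subset_span (by simp)⟩

lemma patterns_count {V : Finset (Fin 3 → ℝ)} (hV : PI V) {v₀ : Fin 3 → ℝ} (hv₀ : v₀ ∈ V)
    (hex : ∃ v ∈ V, v ≠ v₀) :
    {T : Finset (Fin 3 → ℝ) | ∃ y, Gen V v₀ y ∧ T = V.filter (fun v => 0 < dotp y v)}.ncard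
      = 2 * degF V v₀ := by
  classical
  obtain ⟨e, he0, he⟩ := exists_generic hV hv₀
  have hene : e ≠ 0 := by
    rintro rfl
    obtain ⟨v, hv, hne⟩ := hex
    exact he v hv hne (by simp [dotp])
  obtain ⟨e₂, h20, hspan, hker⟩ := frame (hV.1 v₀ hv₀) hene he0
  set ρ : (Fin 3 → ℝ) → ℝ := fun v => dotp e₂ v / dotp e v with hρ
  set R : Finset ℝ := (V.erase v₀).image ρ with hRdef
  have hRn : R.Nonempty := by
    obtain ⟨v, hv, hne⟩ := hex
    exact ⟨ρ v, Finset.mem_image_of_mem _ (Finset.mem_erase.2 ⟨hne, hv⟩)⟩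
  -- degree
  have hpl : ∀ v ∈ V, v ≠ v₀ → ∀ w ∈ V, w ≠ v₀ → (planeF V v₀ v = planeF V v₀ w ↔ ρ v = ρ w) := by
    have hin : ∀ v ∈ V, v ≠ v₀ → ∀ w ∈ V, w ≠ v₀ →
        (w ∈ Submodule.span ℝ ({v₀, v} : Set (Fin 3 → ℝ)) ↔ ρ v = ρ w) := by
      intro v hv hvn w hw hwn
      have h1 := he v hv hvn
      have h2 := he w hw hwn
      rw [Submodule.mem_span_pair]
      constructor
      · rintro ⟨a, b, rfl⟩
        simp only [hρ, dotp_add, dotp_smul, he0, h20, mul_zero, zero_add] at h2 ⊢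
        rw [mul_div_mul_left]
        rintro rfl
        simp at h2
      · intro h
        simp only [hρ] at h
        obtain ⟨c, hc⟩ := hker (w - (dotp e w / dotp e v) • v)
          (by rw [dotp_sub, dotp_smul, div_mul_cancel₀ _ h1, sub_self])
          (by
            rw [dotp_sub, dotp_smul]
            rw [div_eq_div_iff h1 h2] at h
            field_simp
            linarith)
        exact ⟨c, _, by rw [← hc]; exact sub_add_cancel _ _⟩
    intro v hv hvn w hw hwn
    constructor
    · intro h
      rw [← hin v hv hvn w hw hwn]
      have : w ∈ planeF V v₀ w := Finset.mem_filter.2 ⟨hw, Submodule.subset_span (by simp)⟩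
      rw [← h] at this
      exact (Finset.mem_filter.1 this).2
    · intro h
      ext u
      simp only [planeF, Finset.mem_filter]
      refine and_congr_right fun hu => ?_
      by_cases hun : u = v₀
      · subst hun
        exact ⟨fun _ => Submodule.subset_span (by simp), fun _ => Submodule.subset_span (by simp)⟩
      · rw [hin v hv hvn u hu hun, hin w hw hwn u hu hun, h]
  have hdeg : degF V v₀ = R.card := by
    rw [degF, hedges_eq hV hv₀]
    have h1 : {v | v ∈ V ∧ v ≠ v₀} = ((V.erase v₀ : Finset _) : Set (Fin 3 → ℝ)) := by
      ext v; simp [and_comm]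
    rw [h1, ← Finset.coe_image, Set.ncard_coe_finset]
    -- both images have the same card
    apply le_antisymm
    · choose! g hg using fun r (hr : r ∈ R) => Finset.mem_image.1 hr
      have : (V.erase v₀).image (planeF V v₀) ⊆ R.image (fun r => planeF V v₀ (g r)) := by
        intro W hW
        obtain ⟨v, hv, rfl⟩ := Finset.mem_image.1 hW
        have hr : ρ v ∈ R := Finset.mem_image_of_mem _ hv
        obtain ⟨h1, h2⟩ := hg _ hr
        refine Finset.mem_image.2 ⟨ρ v, hr, ?_⟩
        rw [Finset.mem_erase] at hv h1
        exact (hpl _ h1.2 h1.1 _ hv.2 hv.1).2 h2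
      exact (Finset.card_le_card this).trans Finset.card_image_le
    · choose! g hg using fun W (hW : W ∈ (V.erase v₀).image (planeF V v₀)) => Finset.mem_image.1 hW
      have : R ⊆ ((V.erase v₀).image (planeF V v₀)).image (fun W => ρ (g W)) := by
        intro r hr
        obtain ⟨v, hv, rfl⟩ := Finset.mem_image.1 hr
        have hW := Finset.mem_image_of_mem (planeF V v₀) hv
        obtain ⟨h1, h2⟩ := hg _ hW
        refine Finset.mem_image.2 ⟨_, hW, ?_⟩
        rw [Finset.mem_erase] at hv h1
        exact (hpl _ h1.2 h1.1 _ hv.2 hv.1).1 h2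
      exact (Finset.card_le_card this).trans Finset.card_image_le
  rw [hdeg, ← count_line R hRn]
  set G : Finset ℝ → Finset (Fin 3 → ℝ) := fun A =>
    (V.erase v₀).filter (fun v => 0 < dotp e v ↔ ρ v ∈ A) with hG
  have hpat : ∀ a b : ℝ, (∀ r ∈ R, a + b * r ≠ 0) →
      V.filter (fun v => 0 < dotp (a • e + b • e₂) v) = G (R.filter (fun r => 0 < a + b * r)) := by
    intro a b hab
    ext v
    simp only [hG, Finset.mem_filter, Finset.mem_erase]
    have hd : dotp (a • e + b • e₂) v = a * dotp e v + b * dotp e₂ v := by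
      rw [dotp_comm, dotp_add, dotp_smul, dotp_smul, dotp_comm v e, dotp_comm v e₂]
    rw [hd]
    by_cases hv0 : v = v₀
    · subst hv0; simp [he0, h20]
    by_cases hv : v ∈ V
    · have hev := he v hv hv0
      have hr : ρ v ∈ R := Finset.mem_image_of_mem _ (Finset.mem_erase.2 ⟨hv0, hv⟩)
      have h1 := hab _ hr
      have h2 : a * dotp e v + b * dotp e₂ v = dotp e v * (a + b * ρ v) := by
        simp only [hρ]; field_simp
      rw [h2]
      simp only [hv, hv0, hr, true_and, ne_eq, not_false_eq_true]
      rcases lt_or_gt_of_ne hev with h | h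
      · have h3 : ∀ q : ℝ, 0 < dotp e v * q ↔ q < 0 := fun q =>
          ⟨fun h' => by by_contra hq; nlinarith [not_lt.1 hq], fun h' => mul_pos_of_neg_of_neg h h'⟩
        rw [h3]
        simp only [not_lt.2 h.le, false_iff, not_lt]
        exact ⟨fun h => h.le, fun h => lt_of_le_of_ne h h1⟩
      · rw [mul_pos_iff_of_pos_left h]
        simp only [h, true_iff]
    · simp [hv]
  have himg : {T : Finset (Fin 3 → ℝ) | ∃ y, Gen V v₀ y ∧ T = V.filter (fun v => 0 < dotp y v)} =
      G '' {A : Finset ℝ | ∃ a b : ℝ, (∀ r ∈ R, a + b * r ≠ 0) ∧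
      A = R.filter (fun r => 0 < a + b * r)} := by
    have hd : ∀ (a b : ℝ) v, v ∈ V → v ≠ v₀ →
        dotp (a • e + b • e₂) v = dotp e v * (a + b * ρ v) := by
      intro a b v hv hv0
      have hev := he v hv hv0
      rw [dotp_comm, dotp_add, dotp_smul, dotp_smul, dotp_comm v e, dotp_comm v e₂]
      simp only [hρ]; field_simp
    ext T
    constructor
    · rintro ⟨y, ⟨hy0, hy⟩, rfl⟩
      obtain ⟨a, b, rfl⟩ := hspan y hy0
      have hab : ∀ r ∈ R, a + b * r ≠ 0 := by
        intro r hr h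
        obtain ⟨v, hv, rfl⟩ := Finset.mem_image.1 hr
        rw [Finset.mem_erase] at hv
        apply hy v hv.2 hv.1
        rw [hd a b v hv.2 hv.1, h, mul_zero]
      exact ⟨_, ⟨a, b, hab, rfl⟩, (hpat a b hab).symm⟩
    · rintro ⟨_, ⟨a, b, hab, rfl⟩, rfl⟩
      refine ⟨a • e + b • e₂, ⟨?_, ?_⟩, (hpat a b hab).symm⟩
      · rw [dotp_comm, dotp_add, dotp_smul, dotp_smul, dotp_comm v₀ e, dotp_comm v₀ e₂, he0, h20]
        simp
      · intro v hv hv0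
        rw [hd a b v hv hv0]
        exact mul_ne_zero (he v hv hv0)
          (hab _ (Finset.mem_image_of_mem _ (Finset.mem_erase.2 ⟨hv0, hv⟩)))
  rw [himg]
  apply Set.InjOn.ncard_image
  rintro _ ⟨a, b, hab, rfl⟩ _ ⟨a', b', hab', rfl⟩ h
  ext r
  simp only [Finset.mem_filter]
  refine and_congr_right fun hr => ?_
  obtain ⟨v, hv, rfl⟩ := Finset.mem_image.1 hr
  have := Finset.ext_iff.1 h v
  simp only [hG, Finset.mem_filter, hv, hr, true_and] at this
  tauto

end PartFive
section PartSix

lemma exposed_edge {s : Finset (Fin 3 → ℝ)} {P : Set (Fin 3 → ℝ)}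
    (hP : P = convexHull ℝ (s : Set (Fin 3 → ℝ))) {u w : Fin 3 → ℝ} (hne : u ≠ w)
    (hE : IsExtreme ℝ P (segment ℝ u w)) :
    ∃ y, dotp y u = dotp y w ∧ ∀ p ∈ P, p ∈ segment ℝ u w ∨ dotp y p < dotp y u := by
  classical
  have hc : Convex ℝ P := by rw [hP]; exact convex_convexHull _ _
  have hsP : (s : Set (Fin 3 → ℝ)) ⊆ P := by rw [hP]; exact subset_convexHull _ _
  have huP := hE.1 (left_mem_segment ℝ u w)
  have hwP := hE.1 (right_mem_segment ℝ u w)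
  have hline : ∀ r : ℝ, u + r • (w - u) ∈ P → u + r • (w - u) ∈ segment ℝ u w := by
    intro r hr
    rcases lt_or_ge r 0 with h | h
    · refine hE.2 hr hwP (left_mem_segment ℝ u w) (oseg_param.2 ⟨(-r) / (1 - r),
        div_pos (by linarith) (by linarith), by rw [div_lt_one] <;> linarith, ?_⟩)
      have h1 : w - (u + r • (w - u)) = (1 - r) • (w - u) := by module
      rw [h1, smul_smul, div_mul_cancel₀ _ (by linarith)]
      module
    · rcases le_or_gt r 1 with h1 | h1
      · exact seg_param.2 ⟨r, h, h1, rfl⟩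
      · refine hE.2 hr huP (right_mem_segment ℝ u w) (oseg_param.2 ⟨(r - 1) / r,
          div_pos (by linarith) (by linarith), by rw [div_lt_one] <;> linarith, ?_⟩)
        have h1 : u - (u + r • (w - u)) = (-r) • (w - u) := by module
        rw [h1, smul_smul, mul_neg, div_mul_cancel₀ _ (by linarith)]
        module
  set s' := s.filter (fun p => p ∉ segment ℝ u w)
  have hs' : convexHull ℝ (s' : Set (Fin 3 → ℝ)) ⊆ P \ segment ℝ u w := by
    apply convexHull_min _ (hE.convex_sdiff hc)
    intro p hp
    have := Finset.mem_filter.1 hp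
    exact ⟨hsP this.1, this.2⟩
  set L : Set (Fin 3 → ℝ) := (AffineSubspace.mk' u (Submodule.span ℝ {w - u}) : Set (Fin 3 → ℝ))
  have hLmem : ∀ r : ℝ, u + r • (w - u) ∈ L := by
    intro r
    simp only [L, SetLike.mem_coe, AffineSubspace.mem_mk', vsub_eq_sub, add_sub_cancel_left]
    exact Submodule.mem_span_singleton.2 ⟨r, rfl⟩
  have hLmem' : ∀ p ∈ L, ∃ r : ℝ, p = u + r • (w - u) := by
    intro p hp
    simp only [L, SetLike.mem_coe, AffineSubspace.mem_mk', vsub_eq_sub] at hp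
    obtain ⟨r, hr⟩ := Submodule.mem_span_singleton.1 hp
    exact ⟨r, by rw [hr]; abel⟩
  have hdisj : Disjoint (convexHull ℝ (s' : Set (Fin 3 → ℝ))) L := by
    rw [Set.disjoint_left]
    intro p hp hpL
    obtain ⟨r, rfl⟩ := hLmem' p hpL
    exact (hs' hp).2 (hline r (hs' hp).1)
  obtain ⟨f, a, b, h1, hab, h2⟩ := geometric_hahn_banach_compact_closed
    (convex_convexHull ℝ (s' : Set (Fin 3 → ℝ))) (s'.finite_toSet.isCompact_convexHull (𝕜 := ℝ))
    (AffineSubspace.convex _) (AffineSubspace.closed_of_finiteDimensional _) hdisj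
  have hfd : f (w - u) = 0 := by
    by_contra hcon
    have := h2 _ (hLmem ((b - f u) / f (w - u)))
    rw [map_add, map_smul, smul_eq_mul, div_mul_cancel₀ _ hcon] at this
    linarith
  obtain ⟨y, hy⟩ := exists_dotp (f : (Fin 3 → ℝ) →ₗ[ℝ] ℝ)
  have hy' : ∀ x, dotp y x = f x := fun x => (hy x).symm
  have hwu : f w = f u := by rw [map_sub] at hfd; linarith
  have hseg : ∀ p ∈ segment ℝ u w, dotp y p = dotp y u := by
    intro p hp
    obtain ⟨r, _, _, rfl⟩ := seg_param.1 hp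
    simp [hy', hwu]
  refine ⟨y, by rw [hy', hy', hwu], ?_⟩
  have hfu : b < f u := by simpa using h2 _ (hLmem 0)
  have hconv : Convex ℝ {p | p ∈ segment ℝ u w ∨ dotp y p < dotp y u} := by
    intro p hp q hq α β hα hβ hαβ
    rcases eq_or_lt_of_le hα with h | hα
    · subst h
      have : β = 1 := by linarith
      subst this
      simpa using hq
    rcases eq_or_lt_of_le hβ with h | hβ
    · subst h
      have : α = 1 := by linarith
      subst this
      simpa using hp
    have hle : ∀ p, p ∈ segment ℝ u w ∨ dotp y p < dotp y u → dotp y p ≤ dotp y u := by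
      rintro p (h | h)
      · exact (hseg p h).le
      · exact h.le
    have e : dotp y (α • p + β • q) = α * dotp y p + β * dotp y q := by
      rw [dotp_add, dotp_smul, dotp_smul]
    have hp' := hle p hp
    have hq' := hle q hq
    have hs : dotp y u = α * dotp y u + β * dotp y u := by rw [← add_mul, hαβ, one_mul]
    rcases hp with hp | hp
    · rcases hq with hq | hq
      · exact Or.inl (convex_segment u w hp hq hα.le hβ.le hαβ)
      · right
        rw [e]; nlinarith
    · right
      rw [e]; nlinarith
  have hsub : P ⊆ {p | p ∈ segment ℝ u w ∨ dotp y p < dotp y u} := by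
    rw [hP]
    apply convexHull_min _ hconv
    intro p hp
    by_cases hps : p ∈ segment ℝ u w
    · exact Or.inl hps
    · right
      have := h1 p (subset_convexHull ℝ _ (Finset.mem_filter.2 ⟨hp, hps⟩))
      rw [hy', hy']; linarith
  exact fun p hp => hsub hp

open Classical in
/-- base vertex -/
def base (x : Fin 3 → ℝ) (V : Finset (Fin 3 → ℝ)) (y : Fin 3 → ℝ) : Fin 3 → ℝ :=
  x + ∑ v ∈ V.filter (fun v => 0 < dotp y v), v

lemma base_eq (x : Fin 3 → ℝ) (V : Finset (Fin 3 → ℝ)) (y : Fin 3 → ℝ) :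
    base x V y = x + ∑ v ∈ V, (if 0 < dotp y v then (1 : ℝ) else 0) • v := by
  classical
  rw [base, Finset.sum_filter]
  congr 1
  refine Finset.sum_congr rfl fun v _ => ?_
  split_ifs <;> simp

/-- max value -/
def hmax (x : Fin 3 → ℝ) (V : Finset (Fin 3 → ℝ)) (y : Fin 3 → ℝ) : ℝ :=
  dotp y x + ∑ v ∈ V, max 0 (dotp y v)

lemma dotp_base (x : Fin 3 → ℝ) (V : Finset (Fin 3 → ℝ)) (y : Fin 3 → ℝ) :
    dotp y (base x V y) = hmax x V y := by
  rw [base_eq, hmax, dotp_add, dotp_sum]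
  congr 1
  refine Finset.sum_congr rfl fun v _ => ?_
  rw [dotp_smul]
  split_ifs with h
  · rw [max_eq_right h.le, one_mul]
  · rw [max_eq_left (not_lt.1 h), zero_mul]

lemma le_hmax {x y p : Fin 3 → ℝ} {V : Finset (Fin 3 → ℝ)} (hp : p ∈ Zono x V) :
    dotp y p ≤ hmax x V y := (zono_greatest x y V).2 ⟨p, hp, rfl⟩

lemma coef_of_max {x y : Fin 3 → ℝ} {V : Finset (Fin 3 → ℝ)} {a : (Fin 3 → ℝ) → ℝ}
    (ha : ∀ v ∈ V, 0 ≤ a v ∧ a v ≤ 1) (h : dotp y (x + ∑ v ∈ V, a v • v) = hmax x V y) :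
    ∀ v ∈ V, dotp y v ≠ 0 → a v = if 0 < dotp y v then 1 else 0 := by
  have h1 : ∑ v ∈ V, (max 0 (dotp y v) - a v * dotp y v) = 0 := by
    rw [dotp_add, dotp_sum, hmax] at h
    simp only [dotp_smul] at h
    rw [Finset.sum_sub_distrib]; linarith
  rw [Finset.sum_eq_zero_iff_of_nonneg] at h1
  · intro v hv hne
    have h2 := h1 v hv
    split_ifs with h3
    · rw [max_eq_right h3.le] at h2
      have : (1 - a v) * dotp y v = 0 := by linarith
      rcases mul_eq_zero.1 this with h | h
      · linarith
      · exact absurd h hne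
    · rw [max_eq_left (not_lt.1 h3)] at h2
      have : a v * dotp y v = 0 := by linarith
      exact (mul_eq_zero.1 this).resolve_right hne
  · intro v hv
    obtain ⟨h0, h1⟩ := ha v hv
    rcases le_total (dotp y v) 0 with h | h
    · rw [max_eq_left h]; nlinarith
    · rw [max_eq_right h]; nlinarith

lemma face_seg {x y p v₀ : Fin 3 → ℝ} {V : Finset (Fin 3 → ℝ)} (hv₀ : v₀ ∈ V) (hG : Gen V v₀ y)
    (hp : p ∈ Zono x V) (h : dotp y p = hmax x V y) :
    ∃ r : ℝ, 0 ≤ r ∧ r ≤ 1 ∧ p = base x V y + r • v₀ := by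
  classical
  obtain ⟨a, ha, rfl⟩ := mem_zono.1 hp
  refine ⟨a v₀, (ha v₀ hv₀).1, (ha v₀ hv₀).2, ?_⟩
  have hco := coef_of_max ha h
  rw [base_eq, add_assoc]
  congr 1
  rw [← Finset.add_sum_erase V _ hv₀, ← Finset.add_sum_erase V (fun v =>
    (if 0 < dotp y v then (1 : ℝ) else 0) • v) hv₀]
  simp only [hG.1, lt_irrefl, if_false, zero_smul, zero_add]
  rw [add_comm]
  congr 1
  refine Finset.sum_congr rfl fun v hv => ?_
  rw [Finset.mem_erase] at hv
  rw [hco v hv.2 (hG.2 v hv.2 hv.1)]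

lemma base_add_mem {x y v₀ : Fin 3 → ℝ} {V : Finset (Fin 3 → ℝ)} (hv₀ : v₀ ∈ V)
    (h0 : dotp y v₀ = 0) {r : ℝ} (hr0 : 0 ≤ r) (hr1 : r ≤ 1) :
    base x V y + r • v₀ ∈ Zono x V := by
  classical
  refine mem_zono.2 ⟨fun v => if v = v₀ then r else if 0 < dotp y v then (1 : ℝ) else 0, ?_, ?_⟩
  · intro v hv
    dsimp only
    split_ifs
    · exact ⟨hr0, hr1⟩
    · norm_num
    · norm_num
  · rw [base_eq, add_assoc]
    congr 1
    rw [← Finset.add_sum_erase V _ hv₀, ← Finset.add_sum_erase V (fun v =>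
      (if v = v₀ then r else if 0 < dotp y v then (1 : ℝ) else 0) • v) hv₀]
    simp only [h0, lt_irrefl, if_false, zero_smul, zero_add, if_true]
    rw [add_comm]
    congr 1
    refine Finset.sum_congr rfl fun v hv => ?_
    rw [Finset.mem_erase] at hv
    rw [if_neg hv.1]

lemma base_mem (x y : Fin 3 → ℝ) (V : Finset (Fin 3 → ℝ)) : base x V y ∈ Zono x V := by
  classical
  refine mem_zono.2 ⟨_, ?_, base_eq x V y⟩
  intro v hv
  split_ifs <;> norm_num

lemma edge_of_gen {x y v₀ : Fin 3 → ℝ} {V : Finset (Fin 3 → ℝ)} (hv₀ : v₀ ∈ V)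
    (hG : Gen V v₀ y) :
    IsExtreme ℝ (Zono x V) (segment ℝ (base x V y) (base x V y + v₀)) := by
  have hmem : ∀ p, p ∈ segment ℝ (base x V y) (base x V y + v₀) ↔
      p ∈ Zono x V ∧ dotp y p = hmax x V y := by
    intro p
    rw [seg_param]
    simp only [add_sub_cancel_left]
    constructor
    · rintro ⟨r, h0, h1, rfl⟩
      refine ⟨base_add_mem hv₀ hG.1 h0 h1, ?_⟩
      rw [dotp_add, dotp_smul, hG.1, dotp_base]; simp
    · rintro ⟨h1, h2⟩
      exact face_seg hv₀ hG h1 h2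
  refine ⟨fun p hp => ((hmem p).1 hp).1, ?_⟩
  intro p hp q hq r hr hpq
  refine (hmem p).2 ⟨hp, ?_⟩
  have h1 := le_hmax (y := y) hp
  have h2 := le_hmax (y := y) hq
  have h3 := ((hmem r).1 hr).2
  obtain ⟨α, β, hα, hβ, hαβ, rfl⟩ := hpq
  rw [dotp_add, dotp_smul, dotp_smul] at h3
  have : β = 1 - α := by linarith
  subst this
  nlinarith

lemma edge_classify {s : Finset (Fin 3 → ℝ)} {x : Fin 3 → ℝ} {V : Finset (Fin 3 → ℝ)} (hV : PI V)
    (hP : Zono x V = convexHull ℝ (s : Set (Fin 3 → ℝ))) {u w : Fin 3 → ℝ} (hne : u ≠ w)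
    (hE : IsExtreme ℝ (Zono x V) (segment ℝ u w)) :
    ∃ v₀ ∈ V, ∃ y, Gen V v₀ y ∧ ((u = base x V y ∧ w = base x V y + v₀) ∨
      (w = base x V y ∧ u = base x V y + v₀)) := by
  obtain ⟨y, hyuw, hy⟩ := exposed_edge hP hne hE
  have huP := hE.1 (left_mem_segment ℝ u w)
  have hwP := hE.1 (right_mem_segment ℝ u w)
  have huM : dotp y u = hmax x V y := by
    apply le_antisymm (le_hmax huP)
    rw [← dotp_base]
    rcases hy _ (base_mem x y V) with h | h
    · obtain ⟨r, _, _, h⟩ := seg_param.1 h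
      rw [h, dotp_add, dotp_smul, dotp_sub, hyuw]; simp
    · exact h.le
  have hface : ∀ p ∈ Zono x V, dotp y p = hmax x V y → p ∈ segment ℝ u w := by
    intro p hp hpM
    rcases hy p hp with h | h
    · exact h
    · linarith
  have hbs := hface _ (base_mem x y V) (dotp_base x V y)
  obtain ⟨r₀, r₀0, r₀1, hr₀⟩ := seg_param.1 hbs
  have hz : ∀ v ∈ V, dotp y v = 0 → ∃ r : ℝ, 0 ≤ r ∧ r ≤ 1 ∧
      base x V y + v = u + r • (w - u) := by
    intro v hv h0
    have := base_add_mem (x := x) hv h0 zero_le_one le_rfl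
    rw [one_smul] at this
    have h2 := hface _ this (by rw [dotp_add, h0, dotp_base, add_zero])
    exact seg_param.1 h2
  have hex : ∃ v₀ ∈ V, dotp y v₀ = 0 := by
    by_contra hcon
    push Not at hcon
    have hall : ∀ p ∈ Zono x V, dotp y p = hmax x V y → p = base x V y := by
      intro p hp hpM
      obtain ⟨a, ha, rfl⟩ := mem_zono.1 hp
      have := coef_of_max ha hpM
      rw [base_eq]
      congr 1
      exact Finset.sum_congr rfl fun v hv => by rw [this v hv (hcon v hv)]
    exact hne ((hall u huP huM).trans (hall w hwP (hyuw ▸ huM)).symm)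
  obtain ⟨v₀, hv₀, h0⟩ := hex
  have hpar : ∀ v ∈ V, dotp y v = 0 → ∃ c : ℝ, v = c • (w - u) := by
    intro v hv h
    obtain ⟨r, _, _, hr⟩ := hz v hv h
    refine ⟨r - r₀, ?_⟩
    have : v = u + r • (w - u) - base x V y := by rw [← hr]; abel
    rw [this, hr₀]; module
  have hG : Gen V v₀ y := by
    refine ⟨h0, fun v hv hvne h => ?_⟩
    obtain ⟨c, hc⟩ := hpar v hv h
    obtain ⟨c₀, hc₀⟩ := hpar v₀ hv₀ h0
    have hc₀0 : c₀ ≠ 0 := by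
      rintro rfl
      exact hV.1 v₀ hv₀ (by simpa using hc₀)
    refine hV.2 v₀ hv₀ v hv hvne.symm (c / c₀) ?_
    rw [hc₀, smul_smul, div_mul_cancel₀ _ hc₀0, hc]
  refine ⟨v₀, hv₀, y, hG, ?_⟩
  obtain ⟨a, a0, a1, ha⟩ := face_seg hv₀ hG huP huM
  obtain ⟨b, b0, b1, hb⟩ := face_seg hv₀ hG hwP (hyuw ▸ huM)
  obtain ⟨r₁, r₁0, r₁1, hr₁⟩ := hz v₀ hv₀ h0
  have hv0 := hV.1 v₀ hv₀
  have e1 : a + r₀ * (b - a) = 0 := by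
    have : (a + r₀ * (b - a)) • v₀ = 0 := by
      have h2 := hr₀
      rw [ha, hb] at h2
      have h3 : base x V y + (a + r₀ * (b - a)) • v₀ = base x V y := by
        conv_rhs => rw [h2]
        module
      simpa using h3
    exact (smul_eq_zero.1 this).resolve_right hv0
  have e2 : a + r₁ * (b - a) - 1 = 0 := by
    have : (a + r₁ * (b - a) - 1) • v₀ = 0 := by
      have h2 := hr₁
      rw [ha, hb] at h2
      have h3 : base x V y + v₀ + (a + r₁ * (b - a) - 1) • v₀ = base x V y + v₀ := by
        conv_rhs => rw [h2]
        module
      simpa using h3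
    exact (smul_eq_zero.1 this).resolve_right hv0
  rcases le_total a b with hab | hab
  · left
    have ha0 : a = 0 := by nlinarith
    have hb1 : b = 1 := by subst ha0; nlinarith
    subst ha0 hb1
    exact ⟨by simpa using ha, by simpa using hb⟩
  · right
    have hb0 : b = 0 := by nlinarith
    have ha1 : a = 1 := by subst hb0; nlinarith
    subst hb0 ha1
    exact ⟨by simpa using hb, by simpa using ha⟩

lemma PI.eq_of_eq_or_neg {V : Finset (Fin 3 → ℝ)} (hV : PI V) {u v : Fin 3 → ℝ} (hu : u ∈ V)
    (hv : v ∈ V) (h : v = u ∨ v = -u) : v = u := by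
  by_contra hne
  rcases h with h | h
  · exact hne h
  · exact hV.2 u hu v hv (Ne.symm hne) (-1) (by simpa using h)

lemma edge_count {s : Finset (Fin 3 → ℝ)} {x : Fin 3 → ℝ} {V : Finset (Fin 3 → ℝ)} (hV : PI V)
    (hP : Zono x V = convexHull ℝ (s : Set (Fin 3 → ℝ))) {v₀ : Fin 3 → ℝ} (hv₀ : v₀ ∈ V)
    (hex : ∃ v ∈ V, v ≠ v₀) :
    ((edgeSet s (Zono x V)).filter (fun e => e.2 - e.1 = v₀)).card = 2 * degF V v₀ := by
  classical
  rw [← patterns_count hV hv₀ hex, ← Set.ncard_coe_finset]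
  have himg : (((edgeSet s (Zono x V)).filter (fun e => e.2 - e.1 = v₀) : Finset _) :
      Set ((Fin 3 → ℝ) × (Fin 3 → ℝ))) =
      (fun T : Finset (Fin 3 → ℝ) => (x + ∑ v ∈ T, v, x + ∑ v ∈ T, v + v₀)) ''
      {T : Finset (Fin 3 → ℝ) | ∃ y, Gen V v₀ y ∧ T = V.filter (fun v => 0 < dotp y v)} := by
    ext ⟨u, w⟩
    rw [Finset.mem_coe, Finset.mem_filter, mem_edgeSet hP]
    constructor
    · rintro ⟨⟨hne, hE⟩, hd⟩
      obtain ⟨v, hv, y, hG, h⟩ := edge_classify hV hP hne hE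
      have hvv : v₀ = v ∨ v₀ = -v := by
        rcases h with ⟨h1, h2⟩ | ⟨h1, h2⟩
        · left; rw [← hd]; simp only; rw [h1, h2]; abel
        · right; rw [← hd]; simp only; rw [h1, h2]; abel
      have hveq := hV.eq_of_eq_or_neg hv hv₀ hvv
      subst hveq
      rcases h with ⟨h1, h2⟩ | ⟨h1, h2⟩
      · refine ⟨_, ⟨y, hG, rfl⟩, ?_⟩
        simp only
        rw [h1, h2, base]
      · exfalso
        simp only at hd
        rw [h1, h2] at hd
        have h3 : -v₀ = v₀ := by rw [sub_add_cancel_left] at hd; exact hd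
        exact hV.1 v₀ hv₀ (self_eq_neg.1 h3.symm)
    · rintro ⟨_, ⟨y, hG, rfl⟩, h⟩
      obtain ⟨rfl, rfl⟩ := Prod.mk.inj h
      have := edge_of_gen (x := x) hv₀ hG
      rw [base] at this
      refine ⟨⟨?_, ?_⟩, ?_⟩
      · intro h
        exact hV.1 v₀ hv₀ (by simpa using h)
      · convert this
      · simp
  rw [himg]
  apply Set.InjOn.ncard_image
  rintro _ ⟨y, hG, rfl⟩ _ ⟨y', hG', rfl⟩ h
  have h1 : base x V y = base x V y' := by
    have := (Prod.mk.inj h).1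
    unfold base
    convert this
  have h2 := dotp_base x V y
  rw [h1, base_eq] at h2
  have h3 := coef_of_max (fun v hv => by split_ifs <;> norm_num) h2
  ext v
  simp only [Finset.mem_filter]
  refine and_congr_right fun hv => ?_
  by_cases hvn : v = v₀
  · subst hvn; rw [hG.1, hG'.1]
  · have := h3 v hv (hG.2 v hv hvn)
    split_ifs at this with h4 h5 h5
    · exact ⟨fun _ => h4, fun _ => h5⟩
    · norm_num at this
    · norm_num at this
    · exact ⟨fun h => absurd h h5, fun h => absurd h h4⟩

lemma zono_edge_sum {s : Finset (Fin 3 → ℝ)} {x : Fin 3 → ℝ} {V : Finset (Fin 3 → ℝ)} (hV : PI V)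
    (hP : Zono x V = convexHull ℝ (s : Set (Fin 3 → ℝ)))
    (hex : ∀ v₀ ∈ V, ∃ v ∈ V, v ≠ v₀) (z : Fin 3 → ℝ) :
    (1 / 2) * ∑ e ∈ edgeSet s (Zono x V), |dotp z (e.2 - e.1)| =
      ∑ v ∈ V, (2 * (degF V v : ℝ)) * |dotp z v| := by
  classical
  set E := edgeSet s (Zono x V) with hEdef
  set ρ : (Fin 3 → ℝ) × (Fin 3 → ℝ) → (Fin 3 → ℝ) := fun e =>
    if e.2 - e.1 ∈ V then e.2 - e.1 else e.1 - e.2 with hρ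
  have hcl : ∀ e ∈ E, e.2 - e.1 ∈ V ∨ e.1 - e.2 ∈ V := by
    rintro ⟨u, w⟩ he
    rw [hEdef, mem_edgeSet hP] at he
    obtain ⟨v, hv, y, hG, h⟩ := edge_classify hV hP he.1 he.2
    rcases h with ⟨h1, h2⟩ | ⟨h1, h2⟩
    · left; simp only; rw [h1, h2]; simpa using hv
    · right; simp only; rw [h1, h2]; simpa using hv
  have hmap : ∀ e ∈ E, ρ e ∈ V := by
    intro e he
    simp only [hρ]
    split_ifs with h
    · exact h
    · exact (hcl e he).resolve_left h
  rw [← Finset.sum_fiberwise_of_maps_to hmap, Finset.mul_sum]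
  refine Finset.sum_congr rfl fun v hv => ?_
  have hsplit : E.filter (fun e => ρ e = v) =
      E.filter (fun e => e.2 - e.1 = v) ∪ E.filter (fun e => e.1 - e.2 = v) := by
    ext e
    simp only [Finset.mem_union, Finset.mem_filter, hρ]
    constructor
    · rintro ⟨he, h⟩
      split_ifs at h
      · exact Or.inl ⟨he, h⟩
      · exact Or.inr ⟨he, h⟩
    · rintro (⟨he, h⟩ | ⟨he, h⟩)
      · exact ⟨he, by rw [if_pos (h ▸ hv), h]⟩
      · refine ⟨he, ?_⟩
        split_ifs with h2
        · exact hV.eq_of_eq_or_neg hv h2 (Or.inr (by rw [← h]; abel))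
        · exact h
  have hdisj : Disjoint (E.filter (fun e => e.2 - e.1 = v)) (E.filter (fun e => e.1 - e.2 = v)) := by
    rw [Finset.disjoint_left]
    intro e h1 h2
    have h1 := (Finset.mem_filter.1 h1).2
    have h2 := (Finset.mem_filter.1 h2).2
    have h3 : v = -v := by conv_lhs => rw [← h1]
                           rw [← h2]; abel
    exact hV.1 v hv (self_eq_neg.1 h3)
  have hc1 := edge_count hV hP hv (hex v hv)
  have hc2 : (E.filter (fun e => e.1 - e.2 = v)).card = 2 * degF V v := by
    rw [← hc1]
    refine Finset.card_nbij' Prod.swap Prod.swap ?_ ?_ (fun _ _ => rfl) (fun _ _ => rfl)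
    · rintro ⟨u, w⟩ h
      simp only [Finset.coe_filter, Set.mem_ofPred_eq, hEdef, mem_edgeSet hP, Prod.swap_prod_mk] at h ⊢
      rw [segment_symm]
      exact ⟨⟨h.1.1.symm, h.1.2⟩, h.2⟩
    · rintro ⟨u, w⟩ h
      simp only [Finset.coe_filter, Set.mem_ofPred_eq, hEdef, mem_edgeSet hP, Prod.swap_prod_mk] at h ⊢
      rw [segment_symm]
      exact ⟨⟨h.1.1.symm, h.1.2⟩, h.2⟩
  have hval : ∀ e ∈ E.filter (fun e => ρ e = v), |dotp z (e.2 - e.1)| = |dotp z v| := by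
    intro e he
    rw [hsplit, Finset.mem_union, Finset.mem_filter, Finset.mem_filter] at he
    rcases he with ⟨_, h⟩ | ⟨_, h⟩
    · rw [h]
    · rw [← h, ← neg_sub e.1 e.2, dotp_neg, abs_neg]
  rw [Finset.sum_congr rfl hval, Finset.sum_const, hsplit, Finset.card_union_of_disjoint hdisj, hc1,
    hc2, nsmul_eq_mul]
  push_cast
  ring

end PartSix
/-- For a centrally symmetric convex polytope `P ⊂ ℝ³` with nonempty
interior, `A(P,z) = λ` for every nonzero `z` iff `P` is a zonotope whose generator set
`V` satisfies `2 · deg v = λ` for every `v ∈ V` in the hypergraph `ℱ`. -/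
theorem centSymm_avgVert_const_iff (P : Set (Fin 3 → ℝ)) (hP : IsPolytope P)
    (hint : (interior P).Nonempty) (hsym : CentSymm P) (lam : ℝ) :
    (∀ z : Fin 3 → ℝ, z ≠ 0 → avgVert P z = lam) ↔
      ∃ (V : Finset (Fin 3 → ℝ)) (x : Fin 3 → ℝ),
        (∀ v ∈ V, v ≠ 0) ∧
        (∀ u ∈ V, ∀ v ∈ V, u ≠ v → ∀ c : ℝ, v ≠ c • u) ∧
        Submodule.span ℝ (V : Set (Fin 3 → ℝ)) = ⊤ ∧
        P = {x} + ∑ v ∈ V, segment ℝ 0 v ∧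
        ∀ v ∈ V, 2 * (degF V v : ℝ) = lam := by
  classical
  obtain ⟨s, hs⟩ := hP
  have hc : Convex ℝ P := by rw [hs]; exact convex_convexHull _ _
  have hk : IsCompact P := by rw [hs]; exact s.finite_toSet.isCompact_convexHull (𝕜 := ℝ)
  have hn : P.Nonempty := hint.mono interior_subset
  have hne1 : (fun _ => 1 : Fin 3 → ℝ) ≠ 0 := fun h => by simpa using congrFun h 0
  -- the basic formula for zonotopes
  have hzono : ∀ (V : Finset (Fin 3 → ℝ)) (x : Fin 3 → ℝ), PI V →
      Submodule.span ℝ (V : Set (Fin 3 → ℝ)) = ⊤ → P = Zono x V → ∀ z,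
      (∫ t in tMin P z..tMax P z, ((nVert (P ∩ {x | dotp z x = t}) : ℝ))) =
        ∑ v ∈ V, (2 * (degF V v : ℝ)) * |dotp z v| := by
    intro V x hV hsp hPz z
    have hex : ∀ v₀ ∈ V, ∃ v ∈ V, v ≠ v₀ := by
      intro v₀ hv₀
      by_contra hcon
      push Not at hcon
      have h1 : (V : Set (Fin 3 → ℝ)) ⊆ {v₀} := fun v hv => hcon v hv
      have h3 := Submodule.finrank_mono (Submodule.span_mono (R := ℝ) h1)
      have h4 := finrank_span_le_card (R := ℝ) ({v₀} : Set (Fin 3 → ℝ))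
      rw [hsp, finrank_top, Module.finrank_fin_fun] at h3
      simp at h4
      omega
    rw [integral_nVert hs hn z]
    subst hPz
    exact zono_edge_sum hV hs hex z
  constructor
  · intro hA
    obtain ⟨c, hcs⟩ := hsym
    have hform : ∀ z, (1 / 2) * ∑ e ∈ edgeSet s P, |dotp z (e.2 - e.1)| =
        lam * (tMax P z - tMin P z) := by
      intro z
      by_cases hz : z = 0
      · subst hz
        obtain ⟨p, _, hp⟩ := exists_tMax hk hn 0
        obtain ⟨q, _, hq⟩ := exists_tMin hk hn 0
        rw [← hp, ← hq]
        simp [dotp]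
      · have h1 := hA z hz
        rw [avgVert, integral_nVert hs hn z] at h1
        have h2 := width_pos hk hint hz
        rw [← h1]
        field_simp [(sub_pos.2 h2).ne']
    have hlam : 0 < lam := by
      obtain ⟨⟨u, w⟩, he⟩ := edgeSet_nonempty hs hint
      have hne := ((mem_edgeSet hs).1 he).1
      have hz : w - u ≠ 0 := sub_ne_zero.2 hne.symm
      have h1 := hform (w - u)
      have h2 := sub_pos.2 (width_pos hk hint hz)
      have h3 : 0 < ∑ e ∈ edgeSet s P, |dotp (w - u) (e.2 - e.1)| := by
        refine Finset.sum_pos' (fun _ _ => abs_nonneg _) ⟨(u, w), he, ?_⟩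
        exact abs_pos.2 (dotp_self_pos hz).ne'
      by_contra hcon
      nlinarith [not_lt.1 hcon]
    obtain ⟨V, hV, hVsum⟩ := exists_grouping (edgeSet s P)
      (fun e => (1 / (2 * lam)) • (e.2 - e.1))
    have hw : ∀ z, tMax P z - tMin P z = ∑ v ∈ V, |dotp z v| := by
      intro z
      rw [← hVsum z]
      simp only [dotp_smul, abs_mul]
      rw [← Finset.mul_sum, abs_of_pos (by positivity)]
      have := hform z
      field_simp
      linarith
    have hPz := eq_zono_of_width hc hk hn hcs V hw
    have hsp : Submodule.span ℝ (V : Set (Fin 3 → ℝ)) = ⊤ := by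
      by_contra hcon
      obtain ⟨f, hf0, hf⟩ := Submodule.exists_le_ker_of_lt_top _ (lt_top_iff_ne_top.2 hcon)
      obtain ⟨z, hz⟩ := exists_dotp f
      have hz0 : z ≠ 0 := by
        rintro rfl
        apply hf0
        ext x
        simp [hz, dotp]
      have h1 := width_pos hk hint hz0
      have h2 := hw z
      rw [Finset.sum_eq_zero] at h2
      · linarith
      · intro v hv
        rw [← hz, LinearMap.mem_ker.1 (hf (Submodule.subset_span hv)), abs_zero]
    refine ⟨V, _, hV.1, hV.2, hsp, hPz, ?_⟩
    intro v hv
    have := abs_indep hV (fun v => 2 * (degF V v : ℝ) - lam) (fun z => by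
      simp only [sub_mul]
      rw [Finset.sum_sub_distrib, ← hzono V _ hV hsp hPz z, ← Finset.mul_sum, ← hw z,
        integral_nVert hs hn z, hform z, sub_self]) v hv
    simpa [sub_eq_zero] using this
  · rintro ⟨V, x, h1, h2, hsp, hPz, hdeg⟩ z hz
    have hPz : P = Zono x V := hPz
    have hw := sub_pos.2 (width_pos hk hint hz)
    rw [avgVert, hzono V x ⟨h1, h2⟩ hsp hPz z]
    have e1 : ∑ v ∈ V, (2 * (degF V v : ℝ)) * |dotp z v| = lam * (tMax P z - tMin P z) := by
      rw [hPz, zono_width, Finset.mul_sum]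
      exact Finset.sum_congr rfl fun v hv => by rw [hdeg v hv]
    rw [e1]
    field_simp
end
end
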